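/- Let M, A, n ∈ ℕ with M ≥ 1 and n ≥ 2, and set r := M²(3A+1)+2A+M, N := n(n−1)/2, q := ⌈log₂(N+1)⌉, d := 4rM((2r+q)M+(6r+1)A+1), h := d+2, and m := n². Let G := G_{h,d,m}, let f be an (M,A)-quasi-isometry from G to a connected graph H, let x_0, …, x_N be the N+1 leftmost vertices at level q of the binary tree B(G), ordered left to right, and for i ∈ {1,…,N} set S_i := S(Δ(x_i)) ∪ {ℓ_i}, where ℓ_i is the unique leaf of B(G) joined by spines to S(Δ(x_i)); let U := S_1 ∪ … ∪ S_N. Then there are m pairwise disjoint paths P_1, …, P_m in H avoiding B_H(f(R(G)), Mq+A), each with one endvertex in f(S(G)) and one endvertex in f(T(G)), such that for every u ∈ U at most one of the paths P_1, …, P_m meets B_H(f(u), r). -/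

import Mathlib

open SimpleGraph

namespace CGT

/-- Distance between two vertex sets, as an extended natural number. -/
noncomputable def sDist {V : Type*} (G : SimpleGraph V) (U U' : Set V) : ℕ∞ :=
  ⨅ (u : U) (v : U'), G.edist u.1 v.1

/-- The ball of radius `r` around a vertex set `U`. -/
def gBall {V : Type*} (G : SimpleGraph V) (U : Set V) (r : ℕ) : Set V :=
  {v | ∃ u ∈ U, G.edist u v ≤ (r : ℕ∞)}

/-- A set of vertices is connected if the induced subgraph is connected. -/
def SetConn {V : Type*} (G : SimpleGraph V) (U : Set V) : Prop :=
  (G.induce U).Connected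

/-- The vertex set of a walk. -/
def walkSupp {V : Type*} {G : SimpleGraph V} {a b : V} (p : G.Walk a b) : Set V :=
  {v | v ∈ p.support}

/-- `X` separates `Y` and `Z` in `G`: every path with one end in `Y` and one in `Z`
contains a vertex of `X`. -/
def Separates {V : Type*} (G : SimpleGraph V) (X Y Z : Set V) : Prop :=
  ∀ ⦃y z : V⦄, y ∈ Y → z ∈ Z → ∀ p : G.Walk y z, p.IsPath → ∃ x ∈ X, x ∈ p.support

/-- `f` is an `(M,A)`-quasi-isometry from `G` to `H`.  The two-sided distance bound
`M⁻¹ d_G(u,v) - A ≤ d_H(f u, f v) ≤ M d_G(u,v) + A` is stated multiplied out over `ℕ∞`. -/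
structure IsQI {V V' : Type*} (M A : ℕ) (G : SimpleGraph V) (H : SimpleGraph V')
    (f : V → V') : Prop where
  upper : ∀ u v : V, H.edist (f u) (f v) ≤ (M : ℕ∞) * G.edist u v + (A : ℕ∞)
  lower : ∀ u v : V, G.edist u v ≤ (M : ℕ∞) * H.edist (f u) (f v) + (M : ℕ∞) * (A : ℕ∞)
  dense : ∀ w : V', ∃ v : V, H.edist w (f v) ≤ (A : ℕ∞)

/-- `G` is `(M,A)`-quasi-isometric to `H`. -/
def QIsometric {V V' : Type*} (M A : ℕ) (G : SimpleGraph V) (H : SimpleGraph V') : Prop :=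
  ∃ f : V → V', IsQI M A G H f

/-- `X` is a minor of `G`. -/
def HasMinor {V W : Type*} (G : SimpleGraph V) (X : SimpleGraph W) : Prop :=
  ∃ U : W → Set V,
    (∀ x, (U x).Nonempty) ∧ (∀ x, SetConn G (U x)) ∧
    (∀ ⦃x y⦄, x ≠ y → Disjoint (U x) (U y)) ∧
    ∀ ⦃x y⦄, X.Adj x y → ∃ u ∈ U x, ∃ v ∈ U y, G.Adj u v

/-- The `(a × b)`-grid graph. -/
def gridGraph (a b : ℕ) : SimpleGraph (Fin a × Fin b) :=
  SimpleGraph.fromRel (fun u v =>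
    (u.1 = v.1 ∧ u.2.1 + 1 = v.2.1) ∨ (u.2 = v.2 ∧ u.1.1 + 1 = v.1.1))

/-- A `K`-fat model of `X` in `G`: disjoint connected branch sets joined by internally
disjoint branch paths, all pairwise at distance at least `K` except for a branch path and
the branch sets of its endpoints. -/
structure FatModel {V W : Type*} (G : SimpleGraph V) (X : SimpleGraph W) (K : ℕ) where
  branch : W → Set V
  branch_nonempty : ∀ x, (branch x).Nonempty
  branch_connected : ∀ x, SetConn G (branch x)
  branch_disjoint : ∀ ⦃x y⦄, x ≠ y → Disjoint (branch x) (branch y)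
  pathEnd : ∀ ⦃x y⦄, X.Adj x y → V
  path : ∀ ⦃x y⦄ (e : X.Adj x y), G.Walk (pathEnd e) (pathEnd e.symm)
  path_isPath : ∀ ⦃x y⦄ (e : X.Adj x y), (path e).IsPath
  path_symm : ∀ ⦃x y⦄ (e : X.Adj x y), path e.symm = (path e).reverse
  pathEnd_mem : ∀ ⦃x y⦄ (e : X.Adj x y), pathEnd e ∈ branch x
  path_meets : ∀ ⦃x y⦄ (e : X.Adj x y) (z : W) (v : V), v ∈ (path e).support → v ∈ branch z →
    (z = x ∧ v = pathEnd e) ∨ (z = y ∧ v = pathEnd e.symm)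
  path_int_disjoint : ∀ ⦃x y x' y'⦄ (e : X.Adj x y) (e' : X.Adj x' y'), s(x, y) ≠ s(x', y') →
    ∀ v, v ∈ (path e).support → v ∈ (path e').support → v = pathEnd e' ∨ v = pathEnd e'.symm
  fat_branch : ∀ ⦃x y⦄, x ≠ y → (K : ℕ∞) ≤ sDist G (branch x) (branch y)
  fat_path_branch : ∀ ⦃x y⦄ (e : X.Adj x y) (z : W), z ≠ x → z ≠ y →
    (K : ℕ∞) ≤ sDist G (walkSupp (path e)) (branch z)
  fat_paths : ∀ ⦃x y x' y'⦄ (e : X.Adj x y) (e' : X.Adj x' y'), s(x, y) ≠ s(x', y') →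
    (K : ℕ∞) ≤ sDist G (walkSupp (path e)) (walkSupp (path e'))

/-- `X` is a `K`-fat minor of `G`. -/
def IsFatMinor {V W : Type*} (G : SimpleGraph V) (X : SimpleGraph W) (K : ℕ) : Prop :=
  Nonempty (FatModel G X K)

/-- `W` is a `K`-fat `n`-path-connected set in `G`. -/
def FatPathConn {V : Type*} (G : SimpleGraph V) (K n : ℕ) (W : Set V) : Prop :=
  (∃ S : Finset V, ↑S ⊆ W ∧ 2 * n ≤ S.card) ∧
  (∀ ⦃u v : V⦄, u ∈ W → v ∈ W → u ≠ v → (K : ℕ∞) ≤ G.edist u v) ∧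
  ∀ l : ℕ, l ≤ n → ∀ A B : Finset V, ↑A ⊆ W → ↑B ⊆ W → A.card = l → B.card = l →
    ∃ (a b : Fin l → V) (P : ∀ i : Fin l, G.Walk (a i) (b i)),
      (∀ i, (P i).IsPath) ∧ (∀ i, a i ∈ A ∧ b i ∈ B) ∧
      ∀ i j, i ≠ j → (K : ℕ∞) ≤ sDist G (walkSupp (P i)) (walkSupp (P j))

end CGT

namespace Ghdm

/-- Raw vertex codes for the graphs `G_{h,d,m}`:
`path k` is the `k`-th vertex of the base path; `tree j i p` is the vertex at position `p`
of the `i`-th binary tree at level `j` (the root being position `[]`); and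
`spine j i k t e s` is the `s`-th internal vertex of the spine from the `k`-th leaf of that
tree to the `e`-th element of the `t`-th local gluing set at level `j-1`. -/
inductive Raw : Type where
  | path (k : ℕ)
  | tree (j i : ℕ) (p : List Bool)
  | spine (j i k t e s : ℕ)
deriving DecidableEq

/-- `N = 2^{h+1} - 1`, the number of copies of `G_{h,d,m-1}` glued inside `G_{h,d,m}`. -/
def NN (h : ℕ) : ℕ := 2 ^ (h + 1) - 1

/-- Canonical representative of a raw vertex code: all tree roots are identified with the
single root `tree m 1 []`, and the leftmost leaf of tree `i > 1` is identified with the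
rightmost leaf of tree `i - 1` (consecutive copies are glued along these leaves). -/
def canon (h m : ℕ) : Raw → Raw
  | .tree j i p =>
    if p = [] then .tree m 1 []
    else if p = List.replicate h false ∧ 1 < i then .tree j (i - 1) (List.replicate h true)
    else .tree j i p
  | x => x

/-- The `q`-bit binary representation of `i` (most significant bit first);
`false` means "left". -/
def natToBits (q i : ℕ) : List Bool := (List.range q).map fun a => Nat.testBit i (q - 1 - a)

/-- Position of the `k`-th leaf (1-based, from the left) in a binary tree of height `h`. -/
def leafPos (h k : ℕ) : List Bool := natToBits h (k - 1)

/-- The `e`-th element of the `g`-th gluing set `V^{jv}_g` (at level `jv`):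
its element `e = 1` is an anchor of the base path, and its element `e ≥ 2` is a shared
extreme leaf of the trees at level `e`. -/
def VsetElem (h d jv g e : ℕ) : Raw :=
  if e = 1 then .path ((g - 1) * NN h ^ (jv - 1) * (d + 1))
  else if (g - 1) * NN h ^ (jv - e) = 0 then .tree e 1 (List.replicate h false)
  else .tree e ((g - 1) * NN h ^ (jv - e)) (List.replicate h true)

/-- Valid (canonical) vertex codes of `G_{h,d,m}`. -/
def Valid (h d m : ℕ) : Raw → Prop
  | .path k => k ≤ (d + 1) * NN h ^ (m - 1)
  | .tree j i p => 2 ≤ j ∧ j ≤ m ∧ 1 ≤ i ∧ i ≤ NN h ^ (m - j) ∧ p.length ≤ h ∧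
      (p = [] → j = m ∧ i = 1) ∧ (p = List.replicate h false → p ≠ [] → i = 1)
  | .spine j i k t e s => 2 ≤ j ∧ j ≤ m ∧ 1 ≤ i ∧ i ≤ NN h ^ (m - j) ∧
      1 ≤ k ∧ k ≤ 2 ^ h ∧ (t = 2 * k - 2 ∨ t = 2 * k + 1) ∧ 1 ≤ t ∧ t ≤ 2 ^ (h + 1) ∧
      1 ≤ e ∧ e ≤ j - 1 ∧ 1 ≤ s ∧ s ≤ d

/-- Generating adjacencies between raw vertex codes: consecutive base path vertices,
parent/child in the binary trees, consecutive spine vertices, a spine and the leaf it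
starts at, a spine and the gluing-set vertex it ends at (the latter collapsed to a single
edge when `d = 0`). -/
inductive rawAdj (h d : ℕ) : Raw → Raw → Prop
  | base (k : ℕ) : rawAdj h d (.path k) (.path (k + 1))
  | child (j i : ℕ) (p : List Bool) (b : Bool) : p.length < h →
      rawAdj h d (.tree j i p) (.tree j i (p ++ [b]))
  | step (j i k t e s : ℕ) : rawAdj h d (.spine j i k t e s) (.spine j i k t e (s + 1))
  | toLeaf (j i k t e : ℕ) : rawAdj h d (.tree j i (leafPos h k)) (.spine j i k t e 1)
  | toV (j i k t e : ℕ) :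
      rawAdj h d (.spine j i k t e d) (VsetElem h d (j - 1) ((i - 1) * NN h + t) e)
  | short (j i k t e : ℕ) : d = 0 → 1 ≤ k → k ≤ 2 ^ h → (t = 2 * k - 2 ∨ t = 2 * k + 1) →
      1 ≤ t → t ≤ 2 ^ (h + 1) → 1 ≤ e → e ≤ j - 1 →
      rawAdj h d (.tree j i (leafPos h k)) (VsetElem h d (j - 1) ((i - 1) * NN h + t) e)

/-- Adjacency of canonical representatives. -/
def rel (h d m : ℕ) (x y : Raw) : Prop :=
  ∃ a b, rawAdj h d a b ∧ x = canon h m a ∧ y = canon h m b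

/-- The vertex set of `G_{h,d,m}`. -/
def Verts (h d m : ℕ) : Set Raw := {x | Valid h d m x}

/-- The graph `G_{h,d,m}`. -/
def G (h d m : ℕ) : SimpleGraph (Verts h d m) :=
  (SimpleGraph.fromRel (rel h d m)).induce (Verts h d m)

/-- Lift a set of raw codes to a set of vertices of `G_{h,d,m}`. -/
def lift {h d m : ℕ} (S : Set Raw) : Set (Verts h d m) := Subtype.val ⁻¹' S

/-- The root `R(G_{h,d,m})`. -/
def RootR (m : ℕ) : Raw := .tree m 1 []

/-- The gluing set `V^{jv}_g` of `G_{h,d,m}`, as a set of raw codes. -/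
def VsetRaw (h d m jv g : ℕ) : Set Raw :=
  {x | ∃ e, 1 ≤ e ∧ e ≤ jv ∧ x = canon h m (VsetElem h d jv g e)}

/-- The set `S(G_{h,d,m})`. -/
def SsetR (h d m : ℕ) : Set Raw :=
  VsetRaw h d m (m - 1) 1 ∪ {canon h m (.tree m 1 (leafPos h 1))}

/-- The set `T(G_{h,d,m})`. -/
def TsetR (h d m : ℕ) : Set Raw :=
  VsetRaw h d m (m - 1) (2 ^ (h + 1)) ∪ {canon h m (.tree m 1 (leafPos h (2 ^ h)))}

/-- For a vertex of the top binary tree at position `p`, the (1-based) index of the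
leftmost leaf of the top tree below it. -/
def kOf (h : ℕ) (p : List Bool) : ℕ :=
  (p.foldl (fun a b => 2 * a + if b then 1 else 0) 0) * 2 ^ (h - p.length) + 1

/-- `S(Δ(x))` for the vertex `x` of the top binary tree `B(G_{h,d,m})` at position `p`. -/
def SDeltaR (h d m : ℕ) (p : List Bool) : Set Raw :=
  VsetRaw h d m (m - 1) (2 * kOf h p - 1) ∪ {canon h m (.tree m 1 (leafPos h (kOf h p)))}

/-- The leaf of `B(G_{h,d,m})` immediately to the left of the leftmost leaf below the
top-tree vertex at position `p`; it is the unique leaf joined by spines to `S(Δ(x))`. -/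
def leafLeftR (h m : ℕ) (p : List Bool) : Raw :=
  canon h m (.tree m 1 (leafPos h (kOf h p - 1)))

end Ghdm

namespace MG

def Av {W : Type*} (G : SimpleGraph W) (Z : Set W) (a b : W) : Prop :=
  ∃ p : G.Walk a b, ∀ v ∈ p.support, v ∉ Z

variable {W : Type*} {G G' : SimpleGraph W} {Z : Set W} {a b c : W}

theorem Av.symm (h : Av G Z a b) : Av G Z b a := by
  obtain ⟨p, hp⟩ := h
  exact ⟨p.reverse, fun v hv => hp v (by simpa using hv)⟩

theorem Av.trans (h : Av G Z a b) (h' : Av G Z b c) : Av G Z a c := by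
  obtain ⟨p, hp⟩ := h
  obtain ⟨q, hq⟩ := h'
  refine ⟨p.append q, fun v hv => ?_⟩
  rw [Walk.mem_support_append_iff] at hv
  exact hv.elim (hp v) (hq v)

theorem Av.refl (h : a ∉ Z) : Av G Z a a :=
  ⟨Walk.nil, fun v hv => by
    rw [Walk.support_nil, List.mem_singleton] at hv
    exact hv ▸ h⟩

theorem Av.left (h : Av G Z a b) : a ∉ Z := by
  obtain ⟨p, hp⟩ := h
  exact hp a p.start_mem_support

theorem Av.right (h : Av G Z a b) : b ∉ Z := h.symm.left

theorem Av.step (h : Av G Z a b) (h1 : G.Adj b c) (hc : c ∉ Z) : Av G Z a c := by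
  refine h.trans ⟨Walk.cons h1 Walk.nil, fun v hv => ?_⟩
  simp only [Walk.support_cons, Walk.support_nil, List.mem_cons, List.not_mem_nil, or_false] at hv
  rcases hv with rfl | rfl
  · exact h.right
  · exact hc

theorem Av.through (p : G.Walk a b) (hp : ∀ v ∈ p.support, v ∉ Z) :
    ∀ v ∈ p.support, Av G Z a v := by
  classical
  intro v hv
  exact ⟨p.takeUntil v hv, fun w hw => hp w (p.support_takeUntil_subset_support hv hw)⟩

theorem boundary (p : G.Walk a b) (S : Set W) (ha : a ∈ S) (hb : b ∉ S) :
    ∃ u v, u ∈ p.support ∧ v ∈ p.support ∧ G.Adj u v ∧ u ∈ S ∧ v ∉ S := by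
  obtain ⟨e, he, h1, h2⟩ := p.exists_boundary_dart S ha hb
  exact ⟨e.fst, e.snd, p.dart_fst_mem_support_of_mem_darts he,
    p.dart_snd_mem_support_of_mem_darts he, e.adj, h1, h2⟩

theorem half [DecidableEq W] {A B : Set W} {X : Finset W} {x y : W} {k : ℕ}
    (hG : ∀ u v, G.Adj u v → ¬ G'.Adj u v → s(u, v) = s(x, y))
    (h1 : ∀ Z : Finset W, Z.card < k → ∃ a ∈ A, ∃ b ∈ B, Av G ↑Z a b)
    (h2 : ¬ ∃ a ∈ A, ∃ b ∈ B, Av G' ↑X a b)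
    (h3 : ¬ ∃ a ∈ A, Av G' ↑X a y) :
    ∀ Z : Finset W, Z.card < k → ∃ a ∈ A, ∃ p ∈ (↑(insert x X) : Set W), Av G' ↑Z a p := by
  intro Z hZ
  by_contra hcon
  push Not at hcon
  have key : ∀ a ∈ A, ∀ v, Av G' ↑Z a v → Av G' ↑X a v := by
    rintro a ha v ⟨p, hp⟩
    refine ⟨p, fun w hw hwX => ?_⟩
    exact hcon a ha w (by simp only [Finset.coe_insert]; exact Or.inr hwX) (Av.through p hp w hw)
  obtain ⟨a, ha, b, hb, p, hp⟩ := h1 Z hZ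
  have haR : a ∈ {v | ∃ a ∈ A, Av G' ↑Z a v} := ⟨a, ha, Av.refl (hp a p.start_mem_support)⟩
  have hbR : b ∉ {v | ∃ a ∈ A, Av G' ↑Z a v} := by
    rintro ⟨a', ha', h⟩
    exact h2 ⟨a', ha', b, hb, key a' ha' b h⟩
  obtain ⟨u, v, hu, hv, huv, ⟨a', ha', hau⟩, hvS⟩ := boundary p _ haR hbR
  have hn : ¬ G'.Adj u v := fun h => hvS ⟨a', ha', hau.step h (hp v hv)⟩
  rcases Sym2.eq_iff.1 (hG u v huv hn) with ⟨rfl, rfl⟩ | ⟨rfl, rfl⟩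
  · exact hcon a' ha' u (by simp) hau
  · exact h3 ⟨a', ha', key a' ha' u hau⟩

def Link (G : SimpleGraph W) (A B : Set W) (k : ℕ) : Prop :=
  ∃ (a b : Fin k → W) (P : ∀ i : Fin k, G.Walk (a i) (b i)),
    (∀ i, (P i).IsPath) ∧ (∀ i, a i ∈ A ∧ b i ∈ B) ∧
    ∀ i j v, v ∈ (P i).support → v ∈ (P j).support → i = j

theorem Link.index {A : Set W} {P : Finset W} (h : Link G A ↑P P.card) :
    ∃ (a : P → W) (w : ∀ z : P, G.Walk (a z) z.1), (∀ z, (w z).IsPath) ∧ (∀ z, a z ∈ A) ∧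
      ∀ z z' v, v ∈ (w z).support → v ∈ (w z').support → z = z' := by
  obtain ⟨a, b, Q, hQ, hab, hd⟩ := h
  let g : Fin P.card → P := fun i => ⟨b i, (hab i).2⟩
  have hg : Function.Injective g := by
    intro i j hij
    have hb : b i = b j := congrArg Subtype.val hij
    exact hd i j (b i) (Walk.end_mem_support _) (by rw [hb]; exact Walk.end_mem_support _)
  have hbij : Function.Bijective g := by
    rw [Fintype.bijective_iff_injective_and_card]
    exact ⟨hg, by simp⟩
  have hs : ∀ z : P, ∃ i, g i = z := hbij.2
  choose σ hσ using hs
  have hb : ∀ z : P, b (σ z) = z.1 := fun z => congrArg Subtype.val (hσ z)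
  refine ⟨fun z => a (σ z), fun z => (Q (σ z)).copy rfl (hb z), ?_, ?_, ?_⟩
  · intro z
    simpa using hQ (σ z)
  · intro z
    exact (hab _).1
  · intro z z' v hv hv'
    rw [Walk.support_copy] at hv hv'
    have := hd _ _ v hv hv'
    rw [← hσ z, ← hσ z', this]

/-- A `P`-indexed path system meets `P` in each path only at its end; prefixes avoid `P`. -/
theorem prefix_av [DecidableEq W] {P : Finset W} {a : P → W} {w : ∀ z : P, G.Walk (a z) z.1}
    (hw : ∀ z, (w z).IsPath)
    (hd : ∀ z z' v, v ∈ (w z).support → v ∈ (w z').support → z = z')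
    {X : Finset W} (hX : X ⊆ P) (z : P) (v : W) (hv : v ∈ (w z).support) (hvX : v ∉ X) :
    Av G ↑X (a z) v := by
  refine ⟨(w z).takeUntil v hv, fun u hu huX => ?_⟩
  have hu' := (w z).support_takeUntil_subset_support hv hu
  have h1 : z = ⟨u, hX huX⟩ := hd z ⟨u, hX huX⟩ u hu' (Walk.end_mem_support _)
  have h2 : z.1 = u := congrArg Subtype.val h1
  have hne : v ≠ z.1 := by
    intro h
    rw [h2] at h
    exact hvX (h ▸ huX)
  exact Walk.endpoint_notMem_support_takeUntil (hw z) hv hne.symm (h2 ▸ hu)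

theorem menger_aux (n : ℕ) : ∀ {W : Type*} (G : SimpleGraph W) (_ : G.edgeSet.Finite)
    (_ : G.edgeSet.ncard = n) (A B : Set W) (k : ℕ)
    (_ : ∀ Z : Finset W, Z.card < k → ∃ a ∈ A, ∃ b ∈ B, Av G ↑Z a b), Link G A B k := by
  classical
  induction n with
  | zero =>
    intro W G hfin hn A B k h1
    have hG : G = ⊥ := by
      rw [Set.ncard_eq_zero hfin] at hn
      simpa using hn
    subst hG
    have hk : (k : ℕ∞) ≤ (A ∩ B).encard := by
      by_contra hlt
      push Not at hlt
      have hf : (A ∩ B).Finite := Set.finite_of_encard_le_coe hlt.le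
      obtain ⟨a, ha, b, hb, p, hp⟩ := h1 hf.toFinset (by
        rw [hf.encard_eq_coe_toFinset_card] at hlt
        exact_mod_cast hlt)
      cases p with
      | nil => exact hp a (by simp) (by simp [ha, hb])
      | cons h _ => exact absurd h (by simp)
    obtain ⟨Y, hY, hYk⟩ := Set.exists_subset_encard_eq hk
    have hYf : Y.Finite := Set.finite_of_encard_eq_coe hYk
    have hc : hYf.toFinset.card = k := by
      rw [hYf.encard_eq_coe_toFinset_card] at hYk
      exact_mod_cast hYk
    let e := (hYf.toFinset.equivFin.trans (finCongr hc)).symm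
    refine ⟨fun i => (e i).1, fun i => (e i).1, fun i => Walk.nil, fun i => by simp, ?_, ?_⟩
    · intro i
      have := hY (hYf.mem_toFinset.1 (e i).2)
      exact this
    · intro i j v hv hv'
      simp only [Walk.support_nil, List.mem_singleton] at hv hv'
      exact e.injective (Subtype.ext (hv.symm.trans hv'))
  | succ n ih =>
    intro W G hfin hn A B k h1
    have hne : G.edgeSet.Nonempty := by
      rw [← Set.ncard_pos hfin]
      omega
    obtain ⟨e, he⟩ := hne
    set G' := G.deleteEdges {e} with hG'
    have hle : G' ≤ G := G.deleteEdges_le _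
    have hE : G'.edgeSet = G.edgeSet \ {e} := by simp [hG']
    have hfin' : G'.edgeSet.Finite := by rw [hE]; exact hfin.diff
    have hn' : G'.edgeSet.ncard = n := by
      rw [hE, Set.ncard_sdiff_singleton_of_mem he, hn]
      rfl
    by_cases hcase : ∀ Z : Finset W, Z.card < k → ∃ a ∈ A, ∃ b ∈ B, Av G' ↑Z a b
    · obtain ⟨a, b, P, hP, hab, hd⟩ := ih G' hfin' hn' A B k hcase
      refine ⟨a, b, fun i => (P i).mapLe hle, fun i => ?_, hab, ?_⟩
      · simpa using (hP i)
      · intro i j v hv hv'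
        simp only [Walk.support_mapLe_eq_support] at hv hv'
        exact hd i j v hv hv'
    push Not at hcase
    obtain ⟨X, hXk, hX⟩ := hcase
    have h2 : ¬ ∃ a ∈ A, ∃ b ∈ B, Av G' ↑X a b := by
      rintro ⟨a, ha, b, hb, h⟩
      exact hX a ha b hb h
    -- orientation
    obtain ⟨x, y, hxy, hxyG, ⟨ax, hax, hAx⟩, hAy, hyX⟩ : ∃ x y, s(x, y) = e ∧ G.Adj x y ∧
        (∃ a ∈ A, Av G' ↑X a x) ∧ (¬ ∃ a ∈ A, Av G' ↑X a y) ∧ y ∉ X := by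
      obtain ⟨a, ha, b, hb, p, hp⟩ := h1 X hXk
      obtain ⟨u, v, hu, hv, huv, ⟨a', ha', hau⟩, hvS⟩ := boundary p {v | ∃ a ∈ A, Av G' ↑X a v}
        ⟨a, ha, Av.refl (hp a p.start_mem_support)⟩ (fun ⟨a', ha', h⟩ => hX a' ha' b hb h)
      refine ⟨u, v, ?_, huv, ⟨a', ha', hau⟩, hvS, hp v hv⟩
      by_contra hne
      refine hvS ⟨a', ha', hau.step ?_ (hp v hv)⟩
      rw [hG', deleteEdges_adj]
      exact ⟨huv, hne⟩
    have hBx : ¬ ∃ b ∈ B, Av G' ↑X b x := by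
      rintro ⟨b, hb, h⟩
      exact hX ax hax b hb (hAx.trans h.symm)
    have hxX : x ∉ X := hAx.right
    have hxney : x ≠ y := hxyG.ne
    have hdiff : ∀ u v, G.Adj u v → ¬ G'.Adj u v → s(u, v) = s(x, y) := by
      intro u v h h'
      rw [hG', deleteEdges_adj] at h'
      rw [hxy]
      by_contra hne
      exact h' ⟨h, hne⟩
    have hcard : X.card + 1 = k := by
      by_contra hne
      obtain ⟨a, ha, b, hb, p, hp⟩ := h1 (insert x X) (by
        rw [Finset.card_insert_of_notMem hxX]; omega)
      have hp' : ∀ v ∈ p.support, v ∉ X ∧ v ≠ x := by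
        intro v hv
        have := hp v hv
        simp only [Finset.coe_insert, Set.mem_insert_iff, not_or] at this
        exact ⟨this.2, this.1⟩
      obtain ⟨u, v, hu, hv, huv, ⟨a', ha', hau⟩, hvS⟩ := boundary p {v | ∃ a ∈ A, Av G' ↑X a v}
        ⟨a, ha, Av.refl (hp' a p.start_mem_support).1⟩ (fun ⟨a', ha', h⟩ => hX a' ha' b hb h)
      have hn : ¬ G'.Adj u v := fun h => hvS ⟨a', ha', hau.step h (hp' v hv).1⟩
      rcases Sym2.eq_iff.1 (hdiff u v huv hn) with ⟨rfl, rfl⟩ | ⟨rfl, rfl⟩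
      · exact (hp' u hu).2 rfl
      · exact (hp' v hv).2 rfl
    have hL := ih G' hfin' hn' A ↑(insert x X) k (half hdiff h1 h2 hAy)
    have hR := ih G' hfin' hn' B ↑(insert y X) k (half (B := A)
      (fun u v h h' => (hdiff u v h h').trans Sym2.eq_swap)
      (fun Z hZ => by
        obtain ⟨a, ha, b, hb, h⟩ := h1 Z hZ
        exact ⟨b, hb, a, ha, h.symm⟩)
      (by
        rintro ⟨b, hb, a, ha, h⟩
        exact hX a ha b hb h.symm) hBx)
    have hcx : (insert x X).card = k := by rw [Finset.card_insert_of_notMem hxX]; exact hcard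
    have hcy : (insert y X).card = k := by rw [Finset.card_insert_of_notMem hyX]; exact hcard
    obtain ⟨a, w, hw, haA, hwd⟩ := Link.index (by rw [hcx]; exact hL)
    obtain ⟨b, u, hu, hbB, hud⟩ := Link.index (by rw [hcy]; exact hR)
    -- crossing
    have hcross : ∀ z z' v, v ∈ (w z).support → v ∈ (u z').support → v ∈ X ∧ z.1 = v ∧ z'.1 = v := by
      intro z z' v hv hv'
      have hvX : v ∈ X := by
        by_contra hvX
        have p1 := prefix_av hw hwd (Finset.subset_insert x X) z v hv hvX
        have p2 := prefix_av hu hud (Finset.subset_insert y X) z' v hv' hvX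
        exact hX _ (haA z) _ (hbB z') (p1.trans p2.symm)
      refine ⟨hvX, ?_, ?_⟩
      · exact congrArg Subtype.val
          (hwd z ⟨v, Finset.mem_insert_of_mem hvX⟩ v hv (Walk.end_mem_support _))
      · exact congrArg Subtype.val
          (hud z' ⟨v, Finset.mem_insert_of_mem hvX⟩ v hv' (Walk.end_mem_support _))
    -- partner map
    have hpart : ∀ z : (insert x X : Finset W), ∃ z' : (insert y X : Finset W),
        (z.1 ∈ X ∧ z'.1 = z.1 ∨ z.1 = x ∧ z'.1 = y) := by
      rintro ⟨z, hz⟩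
      rcases Finset.mem_insert.1 hz with h | h
      · exact ⟨⟨y, Finset.mem_insert_self _ _⟩, Or.inr ⟨h, rfl⟩⟩
      · exact ⟨⟨z, Finset.mem_insert_of_mem h⟩, Or.inl ⟨h, rfl⟩⟩
    choose τ hτ using hpart
    have hτinj : ∀ z z', τ z = τ z' → z = z' := by
      intro z z' h
      have h' : (τ z).1 = (τ z').1 := by rw [h]
      apply Subtype.ext
      rcases hτ z with ⟨h1, h2⟩ | ⟨h1, h2⟩ <;> rcases hτ z' with ⟨h3, h4⟩ | ⟨h3, h4⟩
      · rw [← h2, ← h4, h']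
      · exact absurd (by rw [← h4, ← h', h2]; exact h1) hyX
      · exact absurd (by rw [← h2, h', h4]; exact h3) hyX
      · rw [h1, h3]
    have hcomb : ∀ z, ∃ p : G.Walk (a z) (b (τ z)), p.IsPath ∧
        ∀ v ∈ p.support, v ∈ (w z).support ∨ v ∈ (u (τ z)).support := by
      intro z
      suffices ∃ p : G.Walk (a z) (b (τ z)),
          ∀ v ∈ p.support, v ∈ (w z).support ∨ v ∈ (u (τ z)).support by
        obtain ⟨p, hp⟩ := this
        exact ⟨p.bypass, p.bypass_isPath, fun v hv => hp v (p.support_bypass_subset_support hv)⟩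
      rcases hτ z with ⟨h1, h2⟩ | ⟨h1, h2⟩
      · refine ⟨((w z).mapLe hle).append (((u (τ z)).mapLe hle).reverse.copy h2 rfl), ?_⟩
        intro v hv
        rw [Walk.mem_support_append_iff] at hv
        simpa using hv
      · have hadj : G.Adj z.1 (τ z).1 := by rw [h1, h2]; exact hxyG
        refine ⟨((w z).mapLe hle).append (Walk.cons hadj ((u (τ z)).mapLe hle).reverse), ?_⟩
        intro v hv
        rw [Walk.mem_support_append_iff] at hv
        simp only [Walk.support_mapLe_eq_support, Walk.support_cons, Walk.support_reverse,
          List.mem_cons, List.mem_reverse] at hv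
        rcases hv with h | h | h
        · exact Or.inl h
        · rw [h]; exact Or.inl (Walk.end_mem_support _)
        · exact Or.inr h
    choose p hp hps using hcomb
    let σ := ((insert x X).equivFin.trans (finCongr hcx)).symm
    refine ⟨fun i => a (σ i), fun i => b (τ (σ i)), fun i => p (σ i), fun i => hp _,
      fun i => ⟨haA _, hbB _⟩, ?_⟩
    intro i j v hv hv'
    apply σ.injective
    have hmix : ∀ z z', v ∈ (w z).support → v ∈ (u (τ z')).support → z = z' := by
      intro z z' h h'
      obtain ⟨h1, h2, h3⟩ := hcross _ _ v h h'
      rcases hτ z' with ⟨h4, h5⟩ | ⟨h4, h5⟩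
      · apply Subtype.ext
        rw [h2, ← h3, h5]
      · exact absurd (by rw [← h5, h3]; exact h1) hyX
    rcases hps _ v hv with h | h <;> rcases hps _ v hv' with h' | h'
    · exact hwd _ _ v h h'
    · exact hmix _ _ h h'
    · exact (hmix _ _ h' h).symm
    · exact hτinj _ _ (hud _ _ v h h')

theorem menger {W : Type*} (G : SimpleGraph W) (hfin : G.edgeSet.Finite)
    (A B : Set W) (k : ℕ)
    (h : ∀ Z : Finset W, Z.card < k → ∃ a ∈ A, ∃ b ∈ B, Av G ↑Z a b) : Link G A B k :=
  menger_aux _ G hfin rfl A B k h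

end MG

set_option linter.unusedVariables false

namespace Pf
open Ghdm

/-- The graph on raw codes. -/
def GR (h d m : ℕ) : SimpleGraph Raw where
  Adj x y := Valid h d m x ∧ Valid h d m y ∧ x ≠ y ∧ (rel h d m x y ∨ rel h d m y x)
  symm := ⟨fun x y hh => ⟨hh.2.1, hh.1, hh.2.2.1.symm, hh.2.2.2.symm⟩⟩
  loopless := ⟨fun x hh => hh.2.2.1 rfl⟩

def homG (h d m : ℕ) : Ghdm.G h d m →g GR h d m where
  toFun := Subtype.val
  map_rel' := by
    intro a b hab
    simp only [Ghdm.G, SimpleGraph.comap_adj, SimpleGraph.fromRel_adj] at hab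
    exact ⟨a.2, b.2, hab.1, hab.2⟩

/-- Explicit edges. -/
inductive Ed (h d m : ℕ) : Raw → Raw → Prop
  | base (k : ℕ) : Ed h d m (.path k) (.path (k + 1))
  | root (j i : ℕ) (b : Bool) : Ed h d m (.tree m 1 []) (.tree j i [b])
  | child (j i : ℕ) (p : List Bool) (b : Bool) : p ≠ [] → p.length < h →
      Ed h d m (.tree j i p) (canon h m (.tree j i (p ++ [b])))
  | step (j i k t e s : ℕ) : Ed h d m (.spine j i k t e s) (.spine j i k t e (s + 1))
  | toLeaf (j i k t e : ℕ) : Ed h d m (canon h m (.tree j i (leafPos h k))) (.spine j i k t e 1)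
  | toV (j i k t e : ℕ) :
      Ed h d m (.spine j i k t e d) (VsetElem h d (j - 1) ((i - 1) * NN h + t) e)

theorem rep_ne {h : ℕ} (hh : 1 ≤ h) : List.replicate h true ≠ List.replicate h false := by
  cases h with
  | zero => omega
  | succ n => simp [List.replicate_succ]

theorem rep_ne_nil {h : ℕ} (hh : 1 ≤ h) (b : Bool) : List.replicate h b ≠ [] := by
  cases h with
  | zero => omega
  | succ n => simp [List.replicate_succ]

theorem canon_V {h m : ℕ} (hh : 1 ≤ h) (d jv g e : ℕ) :
    canon h m (VsetElem h d jv g e) = VsetElem h d jv g e := by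
  unfold VsetElem
  split_ifs
  · rfl
  · simp [canon, rep_ne_nil hh]
  · simp [canon, rep_ne_nil hh, rep_ne hh]

theorem ed_of_rel {h d m : ℕ} (hh : 2 ≤ h) (hd : 1 ≤ d) {x y : Raw} (hr : rel h d m x y) :
    Ed h d m x y := by
  obtain ⟨a, b, hab, rfl, rfl⟩ := hr
  cases hab with
  | base k => exact .base k
  | child j i p b hp =>
    by_cases h0 : p = []
    · subst h0
      have : canon h m (.tree j i ([] ++ [b])) = .tree j i [b] := by
        have : ¬ ([b] = List.replicate h false) := by
          intro hb
          have := congrArg List.length hb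
          simp at this
          omega
        simp [canon, this]
      rw [this]
      simpa [canon] using Ed.root j i b
    · have : canon h m (.tree j i p) = .tree j i p := by
        have : ¬ (p = List.replicate h false) := by
          intro hb
          have := congrArg List.length hb
          simp at this
          omega
        simp [canon, this, h0]
      rw [this]
      exact .child j i p b h0 hp
  | step j i k t e s => exact .step j i k t e s
  | toLeaf j i k t e => exact .toLeaf j i k t e
  | toV j i k t e =>
    rw [canon_V (by omega)]
    exact .toV j i k t e
  | short => omega

theorem adj_cases {h d m : ℕ} (hh : 2 ≤ h) (hd : 1 ≤ d) {x y : Raw} (hr : (GR h d m).Adj x y) :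
    Valid h d m x ∧ Valid h d m y ∧ (Ed h d m x y ∨ Ed h d m y x) :=
  ⟨hr.1, hr.2.1, hr.2.2.2.imp (ed_of_rel hh hd) (ed_of_rel hh hd)⟩

theorem length_leafPos (h k : ℕ) : (leafPos h k).length = h := by
  simp [leafPos, natToBits]

theorem length_ntb (h k : ℕ) : (natToBits h k).length = h := by
  simp [natToBits]

theorem leafPos_one (h : ℕ) : leafPos h 1 = List.replicate h false := by
  simp [leafPos, natToBits]

theorem leafPos_last (h : ℕ) : leafPos h (2 ^ h) = List.replicate h true := by
  simp only [leafPos, natToBits]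
  apply List.ext_getElem
  · simp
  · intro i h1 h2
    simp at h1
    simp [Nat.testBit_two_pow_sub_one]
    omega

/-! ### depth, level, position -/

def dep (h : ℕ) : Raw → ℕ
  | .tree _ _ p => p.length
  | _ => h

def lev : Raw → ℕ
  | .path _ => 1
  | .tree j _ _ => j
  | .spine j _ _ _ _ _ => j

def lo (h d : ℕ) : Raw → ℕ
  | .path k => k / (d + 1)
  | .tree j i p => if p = List.replicate h true then i * NN h ^ (j - 1) else (i - 1) * NN h ^ (j - 1)
  | .spine j i _ _ _ _ => (i - 1) * NN h ^ (j - 1)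

def hi (h d : ℕ) : Raw → ℕ
  | .path k => (k + d) / (d + 1)
  | .tree j i p => if p = List.replicate h false then (i - 1) * NN h ^ (j - 1) else i * NN h ^ (j - 1)
  | .spine j i _ _ _ _ => i * NN h ^ (j - 1)

theorem NN_ge {h : ℕ} (hh : 2 ≤ h) : 3 ≤ NN h := by
  unfold NN
  have : 2 ^ 2 ≤ 2 ^ h := Nat.pow_le_pow_right (by norm_num) hh
  have : 2 ^ (h + 1) = 2 * 2 ^ h := by ring
  omega

theorem NN_succ (h : ℕ) : NN h + 1 = 2 ^ (h + 1) := by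
  unfold NN
  have : 1 ≤ 2 ^ (h + 1) := Nat.one_le_two_pow
  omega

theorem NNp {h : ℕ} (hh : 2 ≤ h) (j : ℕ) : 1 ≤ NN h ^ j :=
  Nat.one_le_pow _ _ (by have := NN_ge hh; omega)

theorem powj {h j : ℕ} (hj : 2 ≤ j) : NN h ^ (j - 1) = NN h * NN h ^ (j - 1 - 1) := by
  obtain ⟨a, rfl⟩ : ∃ a, j = a + 2 := ⟨j - 2, by omega⟩
  simp [pow_succ, Nat.mul_comm]

variable {h d m : ℕ}

theorem dep_canon (x : Raw) (hx : ∀ j i, x ≠ .tree j i []) : dep h (canon h m x) = dep h x := by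
  cases x with
  | path => rfl
  | spine => rfl
  | tree j i p =>
    have : p ≠ [] := fun hp => hx j i (by rw [hp])
    simp only [canon, this, if_false]
    split_ifs with h1
    · simp [dep, h1.1]
    · rfl

theorem lev_canon (x : Raw) (hx : ∀ j i, x ≠ .tree j i []) : lev (canon h m x) = lev x := by
  cases x with
  | path => rfl
  | spine => rfl
  | tree j i p =>
    have : p ≠ [] := fun hp => hx j i (by rw [hp])
    simp only [canon, this, if_false]
    split_ifs with h1
    · simp [lev]
    · rfl

theorem lo_canon (hh : 1 ≤ h) (x : Raw) (hx : ∀ j i, x ≠ .tree j i []) :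
    lo h d (canon h m x) = lo h d x := by
  cases x with
  | path => rfl
  | spine => rfl
  | tree j i p =>
    have : p ≠ [] := fun hp => hx j i (by rw [hp])
    simp only [canon, this, if_false]
    split_ifs with h1
    · simp [lo, h1.1, (rep_ne hh).symm]
    · rfl

theorem hi_canon (hh : 1 ≤ h) (x : Raw) (hx : ∀ j i, x ≠ .tree j i []) :
    hi h d (canon h m x) = hi h d x := by
  cases x with
  | path => rfl
  | spine => rfl
  | tree j i p =>
    have : p ≠ [] := fun hp => hx j i (by rw [hp])
    simp only [canon, this, if_false]
    split_ifs with h1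
    · simp [hi, h1.1, (rep_ne hh)]
    · rfl

theorem tree_ne {j i : ℕ} {p : List Bool} (hp : p ≠ []) (j' i' : ℕ) :
    Raw.tree j i p ≠ .tree j' i' [] := by
  intro hc
  injection hc
  contradiction

theorem dep_V (hh : 1 ≤ h) (jv g e : ℕ) : dep h (VsetElem h d jv g e) = h := by
  unfold VsetElem
  split_ifs <;> simp [dep]

theorem lev_V {jv g e : ℕ} : lev (VsetElem h d jv g e) = e := by
  unfold VsetElem
  split_ifs with h1 <;> simp [lev, h1]

theorem pos_V (hh : 2 ≤ h) {jv g e : ℕ} (he : 1 ≤ e) (hej : e ≤ jv) :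
    lo h d (VsetElem h d jv g e) = (g - 1) * NN h ^ (jv - 1) ∧
    hi h d (VsetElem h d jv g e) = (g - 1) * NN h ^ (jv - 1) := by
  unfold VsetElem
  split_ifs with h1 h2
  · simp only [lo, hi]
    constructor
    · exact Nat.mul_div_cancel _ (by omega)
    · rw [Nat.add_comm, Nat.add_mul_div_right _ _ (by omega), Nat.div_eq_of_lt (by omega), Nat.zero_add]
  · have : g - 1 = 0 := by
      have := NNp hh (jv - e)
      rcases Nat.mul_eq_zero.1 h2 with h | h <;> omega
    simp [lo, hi, this, (rep_ne (show 1 ≤ h by omega)).symm]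
  · have : (g - 1) * NN h ^ (jv - e) * NN h ^ (e - 1) = (g - 1) * NN h ^ (jv - 1) := by
      rw [Nat.mul_assoc, ← pow_add]
      congr 2
      omega
    simp [lo, hi, (rep_ne (show 1 ≤ h by omega)), this]

theorem lp_ne_nil (hh : 1 ≤ h) (k : ℕ) : leafPos h k ≠ [] := by
  intro hc
  have := length_leafPos h k
  rw [hc] at this
  simp at this
  omega

theorem dep_ed (hh : 2 ≤ h) {x y : Raw} (hxy : Ed h d m x y) :
    dep h x ≤ dep h y + 1 ∧ dep h y ≤ dep h x + 1 := by
  cases hxy with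
  | base k => simp [dep]
  | root j i b => simp [dep]
  | child j i p b hp hl =>
    rw [dep_canon _ (tree_ne (by simp))]
    simp [dep]
    omega
  | step => simp [dep]
  | toLeaf =>
    rw [dep_canon _ (tree_ne (lp_ne_nil (by omega) _))]
    simp [dep, length_leafPos]
  | toV =>
    rw [dep_V (by omega)]
    simp [dep]

theorem lo_le_hi (x : Raw) (hx : Valid h d m x) (hh : 2 ≤ h) (h0 : 0 < dep h x) :
    lo h d x ≤ hi h d x := by
  cases x with
  | path k => exact Nat.div_le_div_right (by omega)
  | spine j i k t e s => exact Nat.mul_le_mul_right _ (by omega)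
  | tree j i p =>
    have h1 : (i - 1) * NN h ^ (j - 1) ≤ i * NN h ^ (j - 1) := Nat.mul_le_mul_right _ (by omega)
    have h2 := rep_ne (show 1 ≤ h by omega)
    simp only [lo, hi]
    split_ifs with h3 h4 h4
    · exact absurd (h3.symm.trans h4) h2
    · exact le_rfl
    · exact le_rfl
    · exact h1

/-- `y` lies below `x` (interval and level). -/
def Bel (h d : ℕ) (x y : Raw) : Prop :=
  lev y ≤ lev x ∧ lo h d x ≤ lo h d y ∧ hi h d y ≤ hi h d x

theorem path_step (d k : ℕ) :
    (k / (d + 1) ≠ (k + d) / (d + 1) → (k + 1 + d) / (d + 1) ≤ (k + d) / (d + 1)) ∧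
    ((k + 1) / (d + 1) ≠ (k + 1 + d) / (d + 1) → (k + 1) / (d + 1) ≤ k / (d + 1)) := by
  have e1 : (k + 1 + d) / (d + 1) = k / (d + 1) + 1 := by
    rw [show k + 1 + d = k + (d + 1) by ring, Nat.add_div_right _ (by omega)]
  have hk := Nat.div_add_mod k (d + 1)
  have hlt := Nat.mod_lt k (show 0 < d + 1 by omega)
  set c := k / (d + 1)
  set z := k % (d + 1)
  rw [e1]
  constructor
  · intro hne
    have : z ≠ 0 := by
      intro hz
      apply hne
      rw [hz] at hk
      rw [← hk, Nat.mul_comm, Nat.add_zero, Nat.add_comm, Nat.add_mul_div_right _ _ (by omega),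
        Nat.div_eq_of_lt (by omega), Nat.zero_add]
    rw [Nat.le_div_iff_mul_le (by omega), Nat.mul_comm, Nat.mul_add]
    omega
  · intro hne
    have : z ≠ d := by
      intro hz
      apply hne
      rw [hz] at hk
      rw [← hk, show (d + 1) * c + d + 1 = (c + 1) * (d + 1) by ring, Nat.mul_div_cancel _ (by omega)]
    have : (k + 1) / (d + 1) < c + 1 := by
      rw [Nat.div_lt_iff_lt_mul (by omega)]
      nlinarith [Nat.lt_of_le_of_ne (Nat.lt_succ_iff.1 hlt) this]
    omega

theorem bel_tree (hh : 2 ≤ h) (j i : ℕ) (p p' : List Bool)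
    (hx : lo h d (.tree j i p) ≠ hi h d (.tree j i p)) :
    Bel h d (.tree j i p) (.tree j i p') := by
  have h1 : (i - 1) * NN h ^ (j - 1) ≤ i * NN h ^ (j - 1) := Nat.mul_le_mul_right _ (by omega)
  have h2 := rep_ne (show 1 ≤ h by omega)
  simp only [Bel, lo, hi, lev] at *
  split_ifs at * <;> simp_all

theorem ed_bel (hh : 2 ≤ h) {x y : Raw} (hx : Valid h d m x) (hy : Valid h d m y)
    (hx0 : 0 < dep h x) (hy0 : 0 < dep h y)
    (hxy : Ed h d m x y) :
    (lo h d x ≠ hi h d x → Bel h d x y) ∧ (lo h d y ≠ hi h d y → Bel h d y x) := by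
  cases hxy with
  | base k =>
    have := path_step d k
    have a1 : k / (d + 1) ≤ (k + 1) / (d + 1) := Nat.div_le_div_right (by omega)
    have a2 : (k + d) / (d + 1) ≤ (k + 1 + d) / (d + 1) := Nat.div_le_div_right (by omega)
    exact ⟨fun h1 => ⟨le_rfl, a1, this.1 h1⟩, fun h1 => ⟨le_rfl, this.2 h1, a2⟩⟩
  | root j i b => simp [dep] at hx0
  | child j i p b hp hl =>
    have t1 : ∀ j' i', Raw.tree j i (p ++ [b]) ≠ .tree j' i' [] := tree_ne (by simp)
    unfold Bel
    rw [lo_canon (by omega) _ t1, hi_canon (by omega) _ t1, lev_canon _ t1]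
    exact ⟨fun h1 => bel_tree hh _ _ _ _ h1, fun h1 => bel_tree hh _ _ _ _ h1⟩
  | step => exact ⟨fun h1 => ⟨le_rfl, le_rfl, le_rfl⟩, fun h1 => ⟨le_rfl, le_rfl, le_rfl⟩⟩
  | toLeaf j i k t e =>
    have t1 : ∀ j' i', Raw.tree j i (leafPos h k) ≠ .tree j' i' [] := tree_ne (lp_ne_nil (by omega) _)
    unfold Bel
    rw [lo_canon (by omega) _ t1, hi_canon (by omega) _ t1, lev_canon _ t1]
    have h1 : (i - 1) * NN h ^ (j - 1) ≤ i * NN h ^ (j - 1) := Nat.mul_le_mul_right _ (by omega)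
    have h2 := rep_ne (show 1 ≤ h by omega)
    simp only [lo, hi, lev]
    split_ifs <;> simp_all
  | toV j i k t e =>
    obtain ⟨c1, c2, c3, c4, c5, c6, c7, c8, c9, c10, c11, c12, c13⟩ := hx
    obtain ⟨e1, e2⟩ := pos_V (d := d) hh (jv := j - 1) (g := (i - 1) * NN h + t) (e := e) c10 c11
    refine ⟨fun _ => ⟨?_, ?_, ?_⟩, fun h1 => absurd (e1.trans e2.symm) h1⟩
    · rw [lev_V]
      simp only [lev]
      omega
    · rw [e1]
      simp only [lo]
      rw [powj c1, ← Nat.mul_assoc]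
      exact Nat.mul_le_mul_right _ (by omega)
    · rw [e2]
      simp only [hi]
      rw [powj c1, ← Nat.mul_assoc]
      refine Nat.mul_le_mul_right _ ?_
      have := NN_succ h
      have : i * NN h = (i - 1) * NN h + NN h := by
        obtain ⟨a, rfl⟩ : ∃ a, i = a + 1 := ⟨i - 1, by omega⟩
        simp; ring
      omega

theorem adj_bel (hh : 2 ≤ h) (hd : 1 ≤ d) {x y : Raw} (hxy : (GR h d m).Adj x y)
    (hx0 : 0 < dep h x) (hy0 : 0 < dep h y) (hn : lo h d x ≠ hi h d x) : Bel h d x y := by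
  obtain ⟨h1, h2, h3 | h3⟩ := adj_cases hh hd hxy
  · exact (ed_bel hh h1 h2 hx0 hy0 h3).1 hn
  · exact (ed_bel hh h2 h1 hy0 hx0 h3).2 hn

theorem adj_dep (hh : 2 ≤ h) (hd : 1 ≤ d) {x y : Raw} (hxy : (GR h d m).Adj x y) :
    dep h x ≤ dep h y + 1 := by
  obtain ⟨h1, h2, h3 | h3⟩ := adj_cases hh hd hxy
  · exact (dep_ed hh h3).1
  · exact (dep_ed hh h3).2

theorem walk_dep (hh : 2 ≤ h) (hd : 1 ≤ d) {x y : Raw} (p : (GR h d m).Walk x y) :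
    dep h x ≤ dep h y + p.length := by
  induction p with
  | nil => simp
  | cons hxy p ih =>
    have := adj_dep hh hd hxy
    rw [Walk.length_cons]
    omega

end Pf

set_option linter.unusedVariables false
set_option linter.unusedSimpArgs false

namespace Pf
open Ghdm

/-- capped distance to the nearest branch vertex -/
def eta (h d K : ℕ) : Raw → ℕ
  | .path k => min K (((k + K) % (d + 1) - K) + (K - (k + K) % (d + 1)))
  | .tree _ _ p => min K (h - p.length)
  | .spine _ _ _ _ _ s => min K (min s (d + 1 - s))

def lab0 (h d K : ℕ) : Raw → Raw
  | .path k => .path ((k + K) / (d + 1))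
  | .tree j i p => if p.take (h - K) = List.replicate (h - K) false ∧ 1 < i then
      .tree j (i - 1) (List.replicate (h - K) true) else .tree j i (p.take (h - K))
  | x => x

def lab (h d K : ℕ) : Raw → Raw
  | .spine j i k t e s => if s < K then lab0 h d K (.tree j i (leafPos h k)) else
      lab0 h d K (VsetElem h d (j - 1) ((i - 1) * NN h + t) e)
  | x => lab0 h d K x

variable {h d m K : ℕ}

theorem lab_tree (j i : ℕ) (p : List Bool) : lab h d K (.tree j i p) = lab0 h d K (.tree j i p) := rfl

theorem lab_path (k : ℕ) : lab h d K (.path k) = .path ((k + K) / (d + 1)) := rfl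

theorem lab_V (jv g e : ℕ) : lab h d K (VsetElem h d jv g e) = lab0 h d K (VsetElem h d jv g e) := by
  unfold VsetElem
  split_ifs <;> rfl

theorem eta_V (hK : K ≤ d) (jv g e : ℕ) : eta h d K (VsetElem h d jv g e) = 0 := by
  unfold VsetElem
  split_ifs
  · simp only [eta]
    rw [Nat.add_comm _ K, Nat.add_mul_mod_self_right, Nat.mod_eq_of_lt (by omega)]
    simp
  · simp [eta]
  · simp [eta]

theorem canon_tree (j i : ℕ) {p : List Bool} (hp : p ≠ []) : canon h m (.tree j i p) =
    if p = List.replicate h false ∧ 1 < i then .tree j (i - 1) (List.replicate h true)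
    else .tree j i p := by
  simp [canon, hp]

theorem eta_canon (j i : ℕ) {p : List Bool} (hp : p ≠ []) :
    eta h d K (canon h m (.tree j i p)) = eta h d K (.tree j i p) := by
  rw [canon_tree _ _ hp]
  split_ifs with h1
  · simp [eta, h1.1]
  · rfl

theorem lab_canon (hK : K < h) (j i : ℕ) {p : List Bool} (hp : p ≠ []) :
    lab h d K (canon h m (.tree j i p)) = lab h d K (.tree j i p) := by
  rw [canon_tree _ _ hp]
  split_ifs with h1
  · obtain ⟨rfl, h2⟩ := h1
    have h3 := rep_ne (show 1 ≤ h - K by omega)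
    have h4 : min (h - K) h = h - K := by omega
    simp only [lab, lab0, List.take_replicate, h4, h3, false_and, if_false, h2, and_self, if_true]
  · rfl

theorem mod_step (k d : ℕ) : ((k + 1) % (d + 1) = k % (d + 1) + 1 ∧ (k + 1) / (d + 1) = k / (d + 1)) ∨
    (k % (d + 1) = d ∧ (k + 1) % (d + 1) = 0) := by
  have hlt := Nat.mod_lt k (show 0 < d + 1 by omega)
  have hk := Nat.div_add_mod k (d + 1)
  by_cases hz : k % (d + 1) = d
  · right
    refine ⟨hz, ?_⟩
    rw [Nat.add_mod, hz]
    by_cases hd : d = 0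
    · subst hd; simp [Nat.mod_one]
    · rw [Nat.mod_eq_of_lt (show 1 < d + 1 by omega)]; simp
  · left
    have : k + 1 = (k % (d + 1) + 1) + (d + 1) * (k / (d + 1)) := by omega
    constructor
    · conv_lhs => rw [this]
      rw [Nat.add_mul_mod_self_left, Nat.mod_eq_of_lt (by omega)]
    · conv_lhs => rw [this]
      rw [Nat.add_mul_div_left _ _ (by omega), Nat.div_eq_of_lt (by omega), Nat.zero_add]

theorem ed_eta (hh : 2 ≤ h) (h1K : 1 ≤ K) (hK : 2 * K ≤ d) (hKh : K < h) {x y : Raw}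
    (hxy : Ed h d m x y) :
    eta h d K x ≤ eta h d K y + 1 ∧ eta h d K y ≤ eta h d K x + 1 ∧
      (eta h d K x < K → eta h d K y < K → lab h d K x = lab h d K y) := by
  cases hxy with
  | base k =>
    simp only [eta, lab_path, Raw.path.injEq]
    rw [show k + 1 + K = k + K + 1 by ring]
    have := mod_step (k + K) d
    generalize k + K = z at *
    omega
  | root j i b =>
    simp only [eta, List.length_nil, List.length_singleton]
    omega
  | child j i p b hp hl =>
    rw [eta_canon _ _ (by simp), lab_canon hKh _ _ (by simp)]
    simp only [eta, lab, lab0, List.length_append, List.length_singleton]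
    refine ⟨by omega, by omega, fun h1 h2 => ?_⟩
    rw [List.take_append_of_le_length (by omega)]
  | step j i k t e s =>
    simp only [eta, lab]
    refine ⟨by omega, by omega, fun h1 h2 => ?_⟩
    split_ifs <;> first | rfl | omega
  | toLeaf j i k t e =>
    rw [eta_canon _ _ (lp_ne_nil (by omega) _), lab_canon hKh _ _ (lp_ne_nil (by omega) _)]
    simp only [eta, lab, length_leafPos]
    refine ⟨by omega, by omega, fun h1 h2 => ?_⟩
    rw [if_pos (by omega)]
  | toV j i k t e =>
    rw [eta_V (by omega), lab_V]
    simp only [eta, lab]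
    refine ⟨by omega, by omega, fun h1 h2 => ?_⟩
    rw [if_neg (by omega)]

theorem adj_eta (hh : 2 ≤ h) (h1K : 1 ≤ K) (hK : 2 * K ≤ d) (hKh : K < h) {x y : Raw}
    (hxy : (GR h d m).Adj x y) :
    eta h d K x ≤ eta h d K y + 1 ∧ eta h d K y ≤ eta h d K x + 1 ∧
      (eta h d K x < K → eta h d K y < K → lab h d K x = lab h d K y) := by
  obtain ⟨h1, h2, h3 | h3⟩ := adj_cases hh (by omega) hxy
  · exact ed_eta hh h1K hK hKh h3
  · have := ed_eta hh h1K hK hKh h3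
    exact ⟨this.2.1, this.1, fun a b => (this.2.2 b a).symm⟩

theorem walk_eta (hh : 2 ≤ h) (h1K : 1 ≤ K) (hK : 2 * K ≤ d) (hKh : K < h) {x y : Raw}
    (p : (GR h d m).Walk x y) :
    eta h d K x ≤ eta h d K y + p.length ∧ eta h d K y ≤ eta h d K x + p.length ∧
    ((eta h d K x < K ∧ eta h d K y < K ∧ lab h d K x = lab h d K y) ∨
      2 * K ≤ p.length + eta h d K x + eta h d K y) := by
  induction p with
  | @nil x =>
    simp only [Walk.length_nil]
    refine ⟨by omega, by omega, ?_⟩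
    by_cases hx : eta h d K x < K
    · exact Or.inl (by simpa using hx)
    · right; omega
  | @cons x y z hxy p ih =>
    have h1 := adj_eta hh h1K hK hKh hxy
    rw [Walk.length_cons]
    obtain ⟨i1, i2, i3⟩ := ih
    refine ⟨by omega, by omega, ?_⟩
    rcases i3 with ⟨a, b, c⟩ | a
    · by_cases hx : eta h d K x < K
      · exact Or.inl ⟨hx, b, (h1.2.2 hx a).trans c⟩
      · right; omega
    · by_cases hx : eta h d K x < K
      · by_cases hy : eta h d K y < K
        · by_cases hz : eta h d K z < K
          · right; omega
          · right; omega
        · right; omega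
      · right
        omega

theorem lev_lab0 (x : Raw) : lev (lab0 h d K x) = lev x := by
  cases x with
  | path => rfl
  | spine => rfl
  | tree j i p =>
    simp only [lab0]
    split_ifs <;> rfl

theorem lev_lab (x : Raw) (hx : Valid h d m x) : lev (lab h d K x) ≤ lev x := by
  cases x with
  | path k => exact (lev_lab0 (h := h) (.path k)).le
  | tree j i p => exact (lev_lab0 (d := d) (.tree j i p)).le
  | spine j i k t e s =>
    simp only [lab]
    split_ifs
    · exact (lev_lab0 _).le
    · rw [lev_lab0, lev_V]
      have := hx.2.2.2.2.2.2.2.2.2.2.1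
      simp only [lev]
      omega

theorem lev_lab_eq (x : Raw) (hx : eta h d K x = 0) (h1K : 1 ≤ K) (hv : Valid h d m x) :
    lev (lab h d K x) = lev x := by
  cases x with
  | path k => exact (lev_lab0 (h := h) (.path k))
  | tree j i p => exact (lev_lab0 (d := d) (.tree j i p))
  | spine j i k t e s =>
    have := hv.2.2.2.2.2.2.2.2.2.2.2
    simp only [eta] at hx
    omega

/-- position of a label -/
def Lpos (h K : ℕ) : Raw → ℕ
  | .path k => k
  | .tree j i p => if p = List.replicate (h - K) true then i * NN h ^ (j - 1) else (i - 1) * NN h ^ (j - 1)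
  | .spine _ _ _ _ _ _ => 0

theorem point_lab (hh : 2 ≤ h) (h1K : 1 ≤ K) (hK : 2 * K ≤ d) (hKh : K < h) (x : Raw)
    (hv : Valid h d m x) (hx : lo h d x = hi h d x) :
    eta h d K x = 0 ∧ Lpos h K (lab h d K x) = lo h d x ∧ dep h x = h := by
  cases x with
  | path k =>
    simp only [lo, hi] at hx
    have hk := Nat.div_add_mod k (d + 1)
    have hlt := Nat.mod_lt k (show 0 < d + 1 by omega)
    have hz : k % (d + 1) = 0 := by
      by_contra hz
      have : k / (d + 1) + 1 ≤ (k + d) / (d + 1) := by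
        rw [Nat.le_div_iff_mul_le (by omega), Nat.mul_comm, Nat.mul_add]
        omega
      omega
    rw [hz, Nat.add_zero] at hk
    have e1 : (k + K) % (d + 1) = K := by
      rw [← hk, Nat.add_comm, Nat.add_mul_mod_self_left, Nat.mod_eq_of_lt (by omega)]
    have e2 : (k + K) / (d + 1) = k / (d + 1) := by
      conv_lhs => rw [← hk]
      rw [Nat.add_comm, Nat.add_mul_div_left _ _ (by omega), Nat.div_eq_of_lt (by omega), Nat.zero_add]
    refine ⟨?_, ?_, rfl⟩
    · simp only [eta, e1]; simp
    · simp only [lab_path, Lpos, lo, e2]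
  | spine j i k t e s =>
    simp only [lo, hi] at hx
    have := Nat.eq_of_mul_eq_mul_right (NNp hh (j - 1)) hx
    have := hv.2.2.1
    omega
  | tree j i p =>
    have hi1 := hv.2.2.1
    have hn := rep_ne (show 1 ≤ h by omega)
    have h3 := rep_ne (show 1 ≤ h - K by omega)
    have h4 : min (h - K) h = h - K := by omega
    simp only [lo, hi] at hx
    by_cases hp : p = List.replicate h true
    · subst hp
      simp [eta, lab, lab0, h3, h4, Lpos, lo, dep]
    · by_cases hp' : p = List.replicate h false
      · subst hp'
        have : i = 1 := hv.2.2.2.2.2.2 rfl (rep_ne_nil (by omega) _)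
        subst this
        simp [eta, lab, lab0, h3.symm, h4, Lpos, lo, dep, hn.symm]
      · rw [if_neg hp, if_neg hp'] at hx
        have := Nat.eq_of_mul_eq_mul_right (NNp hh (j - 1)) hx
        omega

/-! ### small sets -/

def Small (h d m ρ : ℕ) (D : Set Raw) : Prop :=
  ∀ x ∈ D, ∀ y ∈ D, ∃ p : (GR h d m).Walk x y, p.length ≤ 2 * ρ ∧ ∀ v ∈ p.support, v ∈ D

/-- Two branch vertices of a small set have the same label. -/
theorem small_lab (hh : 2 ≤ h) {ρ : ℕ} (hρ : 2 * ρ < K) (hK : 2 * K ≤ d) (hKh : K < h)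
    {D : Set Raw} (hD : Small h d m ρ D) {x y : Raw} (hx : x ∈ D) (hy : y ∈ D)
    (ex : eta h d K x = 0) : lab h d K x = lab h d K y := by
  obtain ⟨p, hp, -⟩ := hD x hx y hy
  obtain ⟨h1, h2, h3 | h3⟩ := walk_eta hh (by omega) hK hKh p
  · exact h3.2.2
  · omega

theorem small_lev (hh : 2 ≤ h) {ρ : ℕ} (hρ : 2 * ρ < K) (hK : 2 * K ≤ d) (hKh : K < h)
    {D : Set Raw} (hD : Small h d m ρ D) (hv : ∀ x ∈ D, Valid h d m x)
    {x y : Raw} (hx : x ∈ D) (hy : y ∈ D)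
    (ex : eta h d K x = 0) : lev x ≤ lev y := by
  rw [← lev_lab_eq x ex (by omega) (hv x hx), small_lab hh hρ hK hKh hD hx hy ex]
  exact lev_lab y (hv y hy)

theorem walk_interval (hh : 2 ≤ h) (hd : 1 ≤ d) {x y : Raw} (p : (GR h d m).Walk x y)
    (h0 : ∀ v ∈ p.support, 0 < dep h v) {a b : ℕ} (ha : a ≤ lo h d x) (hb : hi h d x ≤ b) :
    (∃ z ∈ p.support, lo h d z = hi h d z ∧ a ≤ lo h d z ∧ hi h d z ≤ b) ∨
      (a ≤ lo h d y ∧ hi h d y ≤ b) := by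
  induction p with
  | nil => exact Or.inr ⟨ha, hb⟩
  | @cons x y z hxy p ih =>
    by_cases hp : lo h d x = hi h d x
    · exact Or.inl ⟨x, Walk.start_mem_support _, hp, ha, hb⟩
    · have h1 := adj_bel hh hd hxy (h0 _ (Walk.start_mem_support _))
        (h0 _ (by rw [Walk.support_cons]; exact List.mem_cons_of_mem _ (Walk.start_mem_support _))) hp
      rcases ih (fun v hv => h0 v (by rw [Walk.support_cons]; exact List.mem_cons_of_mem _ hv))
        (ha.trans h1.2.1) (h1.2.2.trans hb) with ⟨w, hw, h2⟩ | h2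
      · exact Or.inl ⟨w, by rw [Walk.support_cons]; exact List.mem_cons_of_mem _ hw, h2⟩
      · exact Or.inr h2

end Pf

set_option linter.unusedVariables false
set_option linter.unusedSimpArgs false

namespace Pf
open Ghdm MG

structure Ctx (h d m K ρ ρ0 : ℕ) {ι : Type} (B : ι → Set Raw) : Prop where
  hh : 2 ≤ h
  hρ : 2 * ρ < K
  hK : 2 * K ≤ d
  hKh : K < h
  hρ0 : 2 * ρ ≤ ρ0
  h0 : ρ0 < h
  small : ∀ i, Small h d m ρ (B i)
  val : ∀ i, ∀ x ∈ B i, Valid h d m x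

/-- the forbidden vertices -/
def Zb (h d m ρ0 : ℕ) {ι : Type} (B : ι → Set Raw) : Set Raw :=
  {x | ¬ (Valid h d m x ∧ ρ0 < dep h x ∧ ∀ i, x ∉ B i)}

def Reg (h d m ρ0 l a b : ℕ) : Set Raw :=
  {x | Valid h d m x ∧ ρ0 < dep h x ∧ lev x ≤ l ∧ (a - 1) * NN h ^ (l - 1) ≤ lo h d x ∧
    hi h d x ≤ (b - 1) * NN h ^ (l - 1)}

open Classical in
noncomputable def hits (h d m ρ0 : ℕ) {ι : Type} [Fintype ι] (B : ι → Set Raw) (l a b : ℕ) : Finset ι :=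
  Finset.univ.filter (fun i => ∃ x ∈ B i, x ∈ Reg h d m ρ0 l a b)

def lf (h m j g k : ℕ) : Raw := canon h m (.tree j g (leafPos h k))

variable {h d m K ρ ρ0 : ℕ} {ι : Type} {B : ι → Set Raw}

theorem mem_hits [Fintype ι] {l a b : ℕ} {i : ι} :
    i ∈ hits h d m ρ0 B l a b ↔ ∃ x ∈ B i, x ∈ Reg h d m ρ0 l a b := by
  simp [hits]

theorem Ctx.noroot (C : Ctx h d m K ρ ρ0 B) {i : ι} {x y : Raw} (hx : x ∈ B i)
    (h1 : ρ0 < dep h x) (hy : y ∈ B i) : 0 < dep h y := by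
  obtain ⟨p, hp, -⟩ := C.small i x hx y hy
  have := walk_dep C.hh (by have := C.hK; have := C.hρ; omega) p
  have := C.hρ0
  omega

theorem Ctx.meet (C : Ctx h d m K ρ ρ0 B) {i : ι} {x y : Raw} (hx : x ∈ B i) (hy : y ∈ B i)
    (h1 : ρ0 < dep h x) {α β β' γ : ℕ} (xa : α ≤ lo h d x) (xb : hi h d x ≤ β)
    (ya : β' ≤ lo h d y) (yb : hi h d y ≤ γ) (hb : β ≤ β') :
    β = β' ∧ ∃ z ∈ B i, lo h d z = β ∧ hi h d z = β ∧ lev z ≤ lev x ∧ dep h z = h := by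
  have hd : 1 ≤ d := by have := C.hK; have := C.hρ; omega
  have h1K : 1 ≤ K := by have := C.hρ; omega
  have key : ∀ z ∈ B i, lo h d z = hi h d z → lev z ≤ lev x ∧ dep h z = h := by
    intro z hz hp
    obtain ⟨e1, e2, e3⟩ := point_lab C.hh h1K C.hK C.hKh z (C.val i z hz) hp
    exact ⟨small_lev C.hh C.hρ C.hK C.hKh (C.small i) (C.val i) hz hx e1, e3⟩
  have nr : ∀ z ∈ B i, 0 < dep h z := fun z hz => C.noroot hx h1 hz
  have lx := lo_le_hi x (C.val i x hx) C.hh (nr x hx)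
  have ly := lo_le_hi y (C.val i y hy) C.hh (nr y hy)
  obtain ⟨p, hp, hps⟩ := C.small i x hx y hy
  rcases walk_interval C.hh hd p (fun v hv => nr v (hps v hv)) xa xb with ⟨z, hz, z1, z2, z3⟩ | hyx
  · rcases walk_interval C.hh hd p.reverse (fun v hv => nr v (hps v (by simpa using hv))) ya yb with
      ⟨z', hz', z1', z2', z3'⟩ | hxy
    · have hz := hps z hz
      have hz' := hps z' (by simpa using hz')
      obtain ⟨e1, e2, e3⟩ := point_lab C.hh h1K C.hK C.hKh z (C.val i z hz) z1
      obtain ⟨e1', e2', e3'⟩ := point_lab C.hh h1K C.hK C.hKh z' (C.val i z' hz') z1'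
      have := small_lab C.hh C.hρ C.hK C.hKh (C.small i) hz hz' e1
      rw [this, e2'] at e2
      refine ⟨by omega, z, hz, by omega, by omega, key z hz z1⟩
    · exact ⟨by omega, x, hx, by omega, by omega, key x hx (by omega)⟩
  · exact ⟨by omega, y, hy, by omega, by omega, key y hy (by omega)⟩

theorem canon_tree_ne_spine (x : Raw) (j i : ℕ) (p : List Bool) (a b c e f s : ℕ) :
    canon h m (.tree j i p) ≠ .spine a b c e f s := by
  simp only [canon]
  split_ifs <;> simp

theorem V_ne_spine (jv g e' a b c t e s : ℕ) :
    VsetElem h d jv g e' ≠ .spine a b c t e s := by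
  simp only [VsetElem]
  split_ifs <;> simp

theorem lev_lf (hh : 2 ≤ h) (j g k : ℕ) : lev (lf h m j g k) = j := by
  unfold lf
  rw [lev_canon _ (tree_ne (lp_ne_nil (by omega) _))]
  rfl

theorem eta_lf (hh : 2 ≤ h) (j g k : ℕ) : eta h d K (lf h m j g k) = 0 := by
  unfold lf
  rw [eta_canon _ _ (lp_ne_nil (by omega) _)]
  simp [eta, length_leafPos]

theorem dep_lf (hh : 2 ≤ h) (j g k : ℕ) : dep h (lf h m j g k) = h := by
  unfold lf
  rw [dep_canon _ (tree_ne (lp_ne_nil (by omega) _))]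
  simp [dep, length_leafPos]

theorem lf_pos (hh : 2 ≤ h) (j g k : ℕ) :
    (g - 1) * NN h ^ (j - 1) ≤ lo h d (lf h m j g k) ∧
      hi h d (lf h m j g k) ≤ g * NN h ^ (j - 1) := by
  unfold lf
  have t1 : ∀ j' i', Raw.tree j g (leafPos h k) ≠ .tree j' i' [] := tree_ne (lp_ne_nil (by omega) _)
  rw [lo_canon (by omega) _ t1, hi_canon (by omega) _ t1]
  have h1 : (g - 1) * NN h ^ (j - 1) ≤ g * NN h ^ (j - 1) := Nat.mul_le_mul_right _ (by omega)
  simp only [lo, hi]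
  split_ifs <;> simp_all

theorem valid_lf (hh : 2 ≤ h) {j g k : ℕ} (hj : 2 ≤ j) (hjm : j ≤ m) (hg : 1 ≤ g)
    (hg' : g ≤ NN h ^ (m - j)) : Valid h d m (lf h m j g k) := by
  unfold lf
  have hl := lp_ne_nil (show 1 ≤ h by omega) k
  rw [canon_tree _ _ hl]
  split_ifs with h1
  · refine ⟨hj, hjm, by omega, by omega, by simp, ?_, ?_⟩
    · intro h2
      exact absurd h2 (rep_ne_nil (by omega) _)
    · intro h2
      exact absurd h2 (rep_ne (by omega))
  · refine ⟨hj, hjm, hg, hg', by rw [length_leafPos], fun h2 => absurd h2 hl, fun h2 _ => ?_⟩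
    by_contra h3
    exact h1 ⟨h2, by omega⟩

theorem valid_V (hh : 2 ≤ h) {jv g e : ℕ} (he : 1 ≤ e) (hej : e ≤ jv) (hjm : jv ≤ m)
    (hg : g - 1 ≤ NN h ^ (m - jv)) : Valid h d m (VsetElem h d jv g e) := by
  unfold VsetElem
  split_ifs with h1 h2
  · simp only [Valid]
    rw [Nat.mul_comm]
    refine Nat.mul_le_mul_left _ ?_
    calc (g - 1) * NN h ^ (jv - 1) ≤ NN h ^ (m - jv) * NN h ^ (jv - 1) := Nat.mul_le_mul_right _ hg
      _ = NN h ^ (m - 1) := by rw [← pow_add]; congr 1; omega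
  · refine ⟨by omega, by omega, le_rfl, NNp hh _, by simp, ?_, fun _ _ => rfl⟩
    intro h2
    exact absurd h2 (rep_ne_nil (by omega) _)
  · refine ⟨by omega, by omega, by omega, ?_, by simp, ?_, ?_⟩
    · calc (g - 1) * NN h ^ (jv - e) ≤ NN h ^ (m - jv) * NN h ^ (jv - e) := Nat.mul_le_mul_right _ hg
        _ = NN h ^ (m - e) := by rw [← pow_add]; congr 1; omega
    · intro h2
      exact absurd h2 (rep_ne_nil (by omega) _)
    · intro h2
      exact absurd h2 (rep_ne (by omega))

theorem lf_last (hh : 2 ≤ h) {j g : ℕ} (hg : 1 ≤ g) : lf h m j g (2 ^ h) = lf h m j (g + 1) 1 := by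
  unfold lf
  rw [leafPos_last, leafPos_one, canon_tree _ _ (rep_ne_nil (by omega) _),
    canon_tree _ _ (rep_ne_nil (by omega) _), if_neg (fun h1 => rep_ne (by omega) h1.1),
    if_pos ⟨rfl, by omega⟩]
  rfl

theorem V_top (hh : 2 ≤ h) {j g : ℕ} (hj : 2 ≤ j) (hg : 1 ≤ g) : VsetElem h d j g j = lf h m j g 1 := by
  unfold lf VsetElem
  rw [leafPos_one, canon_tree _ _ (rep_ne_nil (by omega) _), if_neg (by omega)]
  simp only [Nat.sub_self, pow_zero, mul_one, true_and]
  by_cases h1 : g = 1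
  · subst h1
    simp
  · rw [if_neg (by omega), if_pos (by omega)]

theorem V_low {j g e : ℕ} (he : 1 ≤ e) (hej : e ≤ j - 1) :
    VsetElem h d j g e = VsetElem h d (j - 1) ((g - 1) * NN h + 1) e := by
  unfold VsetElem
  have e1 : (g - 1) * NN h ^ (j - 1) = ((g - 1) * NN h + 1 - 1) * NN h ^ (j - 1 - 1) := by
    rw [powj (by omega)]
    simp [Nat.mul_assoc]
  have e2 : (g - 1) * NN h ^ (j - e) = ((g - 1) * NN h + 1 - 1) * NN h ^ (j - 1 - e) := by
    rw [show j - e = (j - 1 - e) + 1 by omega, pow_succ]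
    rw [Nat.add_sub_cancel]
    ring
  rw [e1, e2]

theorem adj_base {k : ℕ} (h1 : Valid h d m (.path (k + 1))) :
    (GR h d m).Adj (.path k) (.path (k + 1)) := by
  refine ⟨?_, h1, by simp, Or.inl ⟨_, _, .base k, rfl, rfl⟩⟩
  simp only [Valid] at *
  omega

theorem adj_step {j i k t e s : ℕ} (h0 : Valid h d m (.spine j i k t e s))
    (h1 : Valid h d m (.spine j i k t e (s + 1))) :
    (GR h d m).Adj (.spine j i k t e s) (.spine j i k t e (s + 1)) :=
  ⟨h0, h1, by simp, Or.inl ⟨_, _, .step j i k t e s, rfl, rfl⟩⟩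

theorem adj_toLeaf {j i k t e : ℕ} (h0 : Valid h d m (lf h m j i k))
    (h1 : Valid h d m (.spine j i k t e 1)) :
    (GR h d m).Adj (lf h m j i k) (.spine j i k t e 1) :=
  ⟨h0, h1, canon_tree_ne_spine (.path 0) _ _ _ _ _ _ _ _ _, Or.inl ⟨_, _, .toLeaf j i k t e, rfl, rfl⟩⟩

theorem adj_toV (hh : 2 ≤ h) {j i k t e : ℕ} (h0 : Valid h d m (.spine j i k t e d))
    (h1 : Valid h d m (VsetElem h d (j - 1) ((i - 1) * NN h + t) e)) :
    (GR h d m).Adj (.spine j i k t e d) (VsetElem h d (j - 1) ((i - 1) * NN h + t) e) :=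
  ⟨h0, h1, (V_ne_spine _ _ _ _ _ _ _ _ _).symm,
    Or.inl ⟨_, _, .toV j i k t e, rfl, (canon_V (by omega) _ _ _ _).symm⟩⟩

/-- leaving a spine -/
theorem Ctx.spine_exit (C : Ctx h d m K ρ ρ0 B) {ix : ι} {j i k t e s : ℕ} {y : Raw}
    (hx : .spine j i k t e s ∈ B ix) (hy : y ∈ B ix) (hl : lev y < j) :
    VsetElem h d (j - 1) ((i - 1) * NN h + t) e ∈ B ix := by
  have hd : 1 ≤ d := by have := C.hK; have := C.hρ; omega
  obtain ⟨p, -, hp⟩ := C.small ix _ hx y hy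
  obtain ⟨u, v, hu, hv, huv, ⟨s', hs'⟩, hnv⟩ := boundary p {x | ∃ s', x = .spine j i k t e s'} ⟨s, rfl⟩
    (by rintro ⟨s', rfl⟩; simp [lev] at hl)
  have hv' := hp v hv
  obtain ⟨v1, v2, h3 | h3⟩ := adj_cases C.hh hd huv
  · cases h3 with
    | base k => simp at hs'
    | root => simp at hs'
    | child => simp at hs'
    | step a b c x y z => 
      simp only [Raw.spine.injEq] at hs'
      obtain ⟨rfl, rfl, rfl, rfl, rfl, -⟩ := hs'
      exact absurd ⟨_, rfl⟩ hnv
    | toLeaf => exact absurd hs' (canon_tree_ne_spine (.path 0) _ _ _ _ _ _ _ _ _)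
    | toV =>
      simp only [Raw.spine.injEq] at hs'
      obtain ⟨rfl, rfl, rfl, rfl, rfl, -⟩ := hs'
      exact hv'
  · cases h3 with
    | base k => simp at hs'
    | root => simp at hs'
    | child => exact absurd hs' (canon_tree_ne_spine (.path 0) _ _ _ _ _ _ _ _ _)
    | step a b c x y z => 
      simp only [Raw.spine.injEq] at hs'
      obtain ⟨rfl, rfl, rfl, rfl, rfl, -⟩ := hs'
      exact absurd ⟨_, rfl⟩ hnv
    | toLeaf a b c x' y' =>
      simp only [Raw.spine.injEq] at hs'
      obtain ⟨rfl, rfl, rfl, rfl, rfl, -⟩ := hs'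
      have := small_lev C.hh C.hρ C.hK C.hKh (C.small ix) (C.val ix) hv' hy (eta_lf C.hh _ _ _)
      have e := lev_lf (m := m) C.hh a b c
      unfold lf at e
      omega
    | toV => exact absurd hs' (V_ne_spine _ _ _ _ _ _ _ _ _)

end Pf

set_option linter.unusedVariables false
set_option linter.unusedSimpArgs false

namespace Pf
open Ghdm MG

variable {h d m K ρ ρ0 : ℕ} {ι : Type} {B : ι → Set Raw}

def Claim (h d m ρ0 : ℕ) {ι : Type} [Fintype ι] (B : ι → Set Raw) (j : ℕ) : Prop :=
  ∀ g0 g1, 1 ≤ g0 → g0 < g1 → g1 ≤ NN h ^ (m - j) + 1 → (hits h d m ρ0 B j g0 g1).card ≤ j - 1 →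
    ∃ e e', (1 ≤ e ∧ e ≤ j) ∧ (1 ≤ e' ∧ e' ≤ j) ∧
      Av (GR h d m) (Zb h d m ρ0 B) (VsetElem h d j g0 e) (VsetElem h d j g1 e')

theorem notZ {x : Raw} (h1 : Valid h d m x) (h2 : ρ0 < dep h x) (h3 : ∀ i, x ∉ B i) :
    x ∉ Zb h d m ρ0 B := fun hc => hc ⟨h1, h2, h3⟩

theorem Ctx.claim_one [Fintype ι] (C : Ctx h d m K ρ ρ0 B) (hm : 1 ≤ m) : Claim h d m ρ0 B 1 := by
  intro g0 g1 hg0 hlt hg1 hc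
  refine ⟨1, 1, ⟨le_rfl, le_rfl⟩, ⟨le_rfl, le_rfl⟩, ?_⟩
  have hc0 : hits h d m ρ0 B 1 g0 g1 = ∅ := Finset.card_eq_zero.1 (by omega)
  have hok : ∀ k, (g0 - 1) * (d + 1) ≤ k → k ≤ (g1 - 1) * (d + 1) →
      Raw.path k ∉ Zb h d m ρ0 B := by
    intro k h1 h2
    have hv : Valid h d m (.path k) := by
      simp only [Valid]
      refine h2.trans ?_
      rw [Nat.mul_comm]
      exact Nat.mul_le_mul_left _ (by omega)
    refine notZ hv C.h0 (fun i hi => ?_)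
    have : i ∈ hits h d m ρ0 B 1 g0 g1 := by
      refine mem_hits.2 ⟨_, hi, hv, C.h0, le_rfl, ?_, ?_⟩
      · simp only [lo, Nat.sub_self, pow_zero, mul_one]
        rw [Nat.le_div_iff_mul_le (by omega)]
        exact h1
      · simp only [Pf.hi, Nat.sub_self, pow_zero, mul_one]
        rw [← Nat.lt_succ_iff, Nat.div_lt_iff_lt_mul (by omega), Nat.succ_mul]
        omega
    rw [hc0] at this
    simp at this
  have e : ∀ g, VsetElem h d 1 g 1 = .path ((g - 1) * (d + 1)) := by
    intro g
    simp [VsetElem]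
  rw [e, e]
  have : ∀ z, (g0 - 1) * (d + 1) + z ≤ (g1 - 1) * (d + 1) →
      Av (GR h d m) (Zb h d m ρ0 B) (.path ((g0 - 1) * (d + 1))) (.path ((g0 - 1) * (d + 1) + z)) := by
    intro z
    induction z with
    | zero => exact fun hz => Av.refl (hok _ le_rfl hz)
    | succ z ih =>
      intro hz
      have h1 := hok ((g0 - 1) * (d + 1) + z + 1) (by omega) hz
      refine (ih (by omega)).step (adj_base ?_) h1
      by_contra h2
      exact h1 (fun h3 => h2 h3.1)
  have h2 : (g0 - 1) * (d + 1) ≤ (g1 - 1) * (d + 1) := Nat.mul_le_mul_right _ (by omega)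
  have := this ((g1 - 1) * (d + 1) - (g0 - 1) * (d + 1)) (by omega)
  rwa [Nat.add_sub_cancel' h2] at this

theorem reg_mono {l a b a' b' : ℕ} (ha : a' ≤ a) (hb : b ≤ b') :
    Reg h d m ρ0 l a b ⊆ Reg h d m ρ0 l a' b' := by
  rintro x ⟨h1, h2, h3, h4, h5⟩
  refine ⟨h1, h2, h3, le_trans (Nat.mul_le_mul_right _ (by omega)) h4,
    le_trans h5 (Nat.mul_le_mul_right _ (by omega))⟩

theorem reg_up {j g0 g1 : ℕ} (hj : 2 ≤ j) :
    Reg h d m ρ0 (j - 1) ((g0 - 1) * NN h + 1) ((g1 - 1) * NN h + 1) ⊆ Reg h d m ρ0 j g0 g1 := by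
  rintro x ⟨h1, h2, h3, h4, h5⟩
  simp only [Nat.add_sub_cancel] at h4 h5
  refine ⟨h1, h2, by omega, ?_, ?_⟩
  · rw [powj hj, ← Nat.mul_assoc]; exact h4
  · rw [powj hj, ← Nat.mul_assoc]; exact h5

theorem hits_mono [Fintype ι] {l a b l' a' b' : ℕ}
    (hs : Reg h d m ρ0 l a b ⊆ Reg h d m ρ0 l' a' b') :
    hits h d m ρ0 B l a b ⊆ hits h d m ρ0 B l' a' b' := by
  intro i hi
  obtain ⟨x, hx, hx'⟩ := mem_hits.1 hi
  exact mem_hits.2 ⟨x, hx, hs hx'⟩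

/-- A leaf is joined to gluing vertices through spines. -/
theorem Ctx.spine_av (C : Ctx h d m K ρ ρ0 B) {j g0 g1 : ℕ} (hj : 2 ≤ j) (hjm : j ≤ m)
    (hg0 : 1 ≤ g0) (hg1 : g1 ≤ NN h ^ (m - j) + 1)
    (hgood : ∀ i, ∀ x ∈ B i, x ∈ Reg h d m ρ0 j g0 g1 → ∃ y ∈ B i, lev y < j)
    {g k : ℕ} (hg : g0 ≤ g) (hg' : g < g1) :
    lf h m j g k ∉ Zb h d m ρ0 B ∧
    ∀ t e, 1 ≤ k → k ≤ 2 ^ h → (t = 2 * k - 2 ∨ t = 2 * k + 1) → 1 ≤ t → t ≤ 2 ^ (h + 1) →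
      1 ≤ e → e ≤ j - 1 → VsetElem h d (j - 1) ((g - 1) * NN h + t) e ∉ Zb h d m ρ0 B →
      Av (GR h d m) (Zb h d m ρ0 B) (lf h m j g k) (VsetElem h d (j - 1) ((g - 1) * NN h + t) e) := by
  have hh := C.hh
  have hvl : Valid h d m (lf h m j g k) := valid_lf hh hj hjm (by omega) (by omega)
  have hdl : ρ0 < dep h (lf h m j g k) := by rw [dep_lf hh]; exact C.h0
  have hlow : (g0 - 1) * NN h ^ (j - 1) ≤ (g - 1) * NN h ^ (j - 1) := Nat.mul_le_mul_right _ (by omega)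
  have hup : g * NN h ^ (j - 1) ≤ (g1 - 1) * NN h ^ (j - 1) := Nat.mul_le_mul_right _ (by omega)
  have hlz : lf h m j g k ∉ Zb h d m ρ0 B := by
    refine notZ hvl hdl (fun i hi => ?_)
    have := lf_pos (d := d) (m := m) hh j g k
    obtain ⟨y, hy, hly⟩ := hgood i _ hi ⟨hvl, hdl, (lev_lf hh _ _ _).le, by omega, by omega⟩
    have := small_lev C.hh C.hρ C.hK C.hKh (C.small i) (C.val i) hi hy (eta_lf C.hh _ _ _)
    rw [lev_lf hh] at this
    omega
  refine ⟨hlz, fun t e hk hk' ht ht1 ht2 he he' hV => ?_⟩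
  have hvs : ∀ s, 1 ≤ s → s ≤ d → Valid h d m (.spine j g k t e s) := fun s h1 h2 =>
    ⟨hj, hjm, by omega, by omega, hk, hk', ht, ht1, ht2, he, he', h1, h2⟩
  have hos : ∀ s, 1 ≤ s → s ≤ d → Raw.spine j g k t e s ∉ Zb h d m ρ0 B := by
    intro s h1 h2
    refine notZ (hvs s h1 h2) C.h0 (fun i hi => ?_)
    obtain ⟨y, hy, hly⟩ := hgood i _ hi ⟨hvs s h1 h2, C.h0, le_rfl, hlow, hup⟩
    have := C.spine_exit hi hy hly
    exact hV (fun h3 => h3.2.2 i this)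
  have hd : 1 ≤ d := by have := C.hK; have := C.hρ; omega
  have : ∀ s, s + 1 ≤ d → Av (GR h d m) (Zb h d m ρ0 B) (lf h m j g k) (.spine j g k t e (s + 1)) := by
    intro s
    induction s with
    | zero => exact fun hs => (Av.refl hlz).step (adj_toLeaf hvl (hvs _ le_rfl hs)) (hos _ le_rfl hs)
    | succ s ih =>
      intro hs
      exact (ih (by omega)).step (adj_step (hvs _ (by omega) (by omega)) (hvs _ (by omega) hs))
        (hos _ (by omega) hs)
  have h1 := this (d - 1) (by omega)
  rw [Nat.sub_add_cancel hd] at h1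
  refine h1.step (adj_toV hh (hvs d hd le_rfl) ?_) hV
  by_contra h2
  exact hV (fun h3 => h2 h3.1)

theorem mulsucc {a b c : ℕ} (hab : a < b) : a * c + c ≤ b * c := by
  rw [← Nat.succ_mul]
  exact Nat.mul_le_mul_right _ hab

theorem Ctx.claim_step [Fintype ι] (C : Ctx h d m K ρ ρ0 B) {j : ℕ} (hj : 2 ≤ j) (hjm : j ≤ m)
    (IH : Claim h d m ρ0 B (j - 1)) : Claim h d m ρ0 B j := by
  intro g0 g1 hg0 hlt hg1 hcard
  have hh := C.hh
  have hN := NN_ge hh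
  have hN2 := NN_succ h
  have h2h : 2 ^ (h + 1) = 2 * 2 ^ h := by ring
  have h2h' : 4 ≤ 2 ^ h := by
    calc 4 = 2 ^ 2 := by norm_num
      _ ≤ 2 ^ h := Nat.pow_le_pow_right (by norm_num) hh
  have hen : (g1 - 1) * NN h + 1 ≤ NN h ^ (m - (j - 1)) + 1 := by
    rw [show m - (j - 1) = (m - j) + 1 by omega, pow_succ]
    exact Nat.add_le_add_right (Nat.mul_le_mul_right _ (by omega)) 1
  have hse : (g0 - 1) * NN h + NN h ≤ (g1 - 1) * NN h := mulsucc (by omega)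
  by_cases hlow : (hits h d m ρ0 B (j - 1) ((g0 - 1) * NN h + 1) ((g1 - 1) * NN h + 1)).card ≤ j - 1 - 1
  · obtain ⟨e, e', h1, h2, h3⟩ := IH _ _ (by omega) (by omega) hen hlow
    refine ⟨e, e', ⟨h1.1, by omega⟩, ⟨h2.1, by omega⟩, ?_⟩
    rw [V_low h1.1 h1.2, V_low h2.1 h2.2]
    exact h3
  have hsub := hits_mono (B := B) (reg_up (h := h) (d := d) (m := m) (ρ0 := ρ0) (g0 := g0) (g1 := g1) hj)
  have heq := Finset.eq_of_subset_of_card_le hsub (by omega)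
  have hgood : ∀ i, ∀ x ∈ B i, x ∈ Reg h d m ρ0 j g0 g1 → ∃ y ∈ B i, lev y < j := by
    intro i x hx hxr
    have : i ∈ hits h d m ρ0 B j g0 g1 := mem_hits.2 ⟨x, hx, hxr⟩
    rw [← heq] at this
    obtain ⟨y, hy, hyr⟩ := mem_hits.1 this
    exact ⟨y, hy, by have := hyr.2.2.1; omega⟩
  have hsp := fun g k hg hg' => C.spine_av (k := k) hj hjm hg0 hg1 hgood (g := g) hg hg'
  -- left and right connections
  have left : ∀ g k, g0 ≤ g → g < g1 → 1 ≤ k → k ≤ 2 ^ h →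
      (∀ b, (g0 - 1) * NN h + 1 < b → b ≤ (g - 1) * NN h + 2 * k - 2 →
        (hits h d m ρ0 B (j - 1) ((g0 - 1) * NN h + 1) b).card ≤ j - 1 - 1) →
      ∃ e, (1 ≤ e ∧ e ≤ j) ∧ Av (GR h d m) (Zb h d m ρ0 B) (VsetElem h d j g0 e) (lf h m j g k) := by
    intro g k hg hg' hk hk' hyp
    have hgg : g * NN h ≤ (g1 - 1) * NN h := Nat.mul_le_mul_right _ (by omega)
    have hgg' : (g - 1) * NN h + NN h ≤ g * NN h := mulsucc (by omega)
    by_cases hk1 : k = 1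
    · subst hk1
      by_cases hgg0 : g = g0
      · subst hgg0
        exact ⟨j, ⟨by omega, le_rfl⟩, by
          rw [V_top (m := m) hh hj hg0]
          exact Av.refl (hsp g 1 hg hg').1⟩
      · have e1 : lf h m j g 1 = lf h m j (g - 1) (2 ^ h) := by
          rw [lf_last hh (by omega), Nat.sub_add_cancel (by omega)]
        have e2 : (g - 1 - 1) * NN h + NN h = (g - 1) * NN h := by
          rw [← Nat.succ_mul]; congr 1; omega
        have e3 : (g0 - 1) * NN h + NN h ≤ (g - 1) * NN h := mulsucc (by omega)
        obtain ⟨e, e', h1, h2, h3⟩ := IH ((g0 - 1) * NN h + 1) ((g - 1 - 1) * NN h + (2 * 2 ^ h - 2))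
          (by omega) (by omega) (by omega) (hyp _ (by omega) (by omega))
        refine ⟨e, ⟨h1.1, by omega⟩, ?_⟩
        rw [V_low h1.1 h1.2, e1]
        exact h3.trans ((hsp (g - 1) (2 ^ h) (by omega) (by omega)).2 (2 * 2 ^ h - 2) e' (by omega) le_rfl
          (Or.inl rfl) (by omega) (by omega) h2.1 h2.2 h3.right).symm
    · have e3 : (g0 - 1) * NN h ≤ (g - 1) * NN h := Nat.mul_le_mul_right _ (by omega)
      obtain ⟨e, e', h1, h2, h3⟩ := IH ((g0 - 1) * NN h + 1) ((g - 1) * NN h + (2 * k - 2))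
          (by omega) (by omega) (by omega) (hyp _ (by omega) (by omega))
      refine ⟨e, ⟨h1.1, by omega⟩, ?_⟩
      rw [V_low h1.1 h1.2]
      exact h3.trans ((hsp g k (by omega) (by omega)).2 (2 * k - 2) e' (by omega) hk'
          (Or.inl rfl) (by omega) (by omega) h2.1 h2.2 h3.right).symm
  have right : ∀ g k, g0 ≤ g → g < g1 → 1 ≤ k → k ≤ 2 ^ h →
      (∀ a, (g - 1) * NN h + 2 * k + 1 ≤ a → a < (g1 - 1) * NN h + 1 →
        (hits h d m ρ0 B (j - 1) a ((g1 - 1) * NN h + 1)).card ≤ j - 1 - 1) →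
      ∃ e, (1 ≤ e ∧ e ≤ j) ∧ Av (GR h d m) (Zb h d m ρ0 B) (lf h m j g k) (VsetElem h d j g1 e) := by
    intro g k hg hg' hk hk' hyp
    have hgg : g * NN h ≤ (g1 - 1) * NN h := Nat.mul_le_mul_right _ (by omega)
    have hgg' : (g - 1) * NN h + NN h = g * NN h := by
      rw [← Nat.succ_mul]; congr 1; omega
    by_cases hk1 : k = 2 ^ h
    · subst hk1
      rw [lf_last hh (by omega)]
      by_cases hgg0 : g + 1 = g1
      · subst hgg0
        refine ⟨j, ⟨by omega, le_rfl⟩, ?_⟩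
        rw [V_top (m := m) hh hj (by omega)]
        have := (hsp g (2 ^ h) hg hg').1
        rw [lf_last hh (by omega)] at this
        exact Av.refl this
      · have e3 : g * NN h + NN h ≤ (g1 - 1) * NN h := mulsucc (by omega)
        obtain ⟨e, e', h1, h2, h3⟩ := IH ((g + 1 - 1) * NN h + (2 * 1 + 1)) ((g1 - 1) * NN h + 1)
          (by omega) (by rw [Nat.add_sub_cancel]; omega) (by omega)
          (hyp _ (by rw [Nat.add_sub_cancel]; omega) (by rw [Nat.add_sub_cancel]; omega))
        refine ⟨e', ⟨h2.1, by omega⟩, ?_⟩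
        rw [V_low h2.1 h2.2]
        exact ((hsp (g + 1) 1 (by omega) (by omega)).2 (2 * 1 + 1) e (by omega) (by omega)
          (Or.inr rfl) (by omega) (by omega) h1.1 h1.2 h3.left).trans h3
    · obtain ⟨e, e', h1, h2, h3⟩ := IH ((g - 1) * NN h + (2 * k + 1)) ((g1 - 1) * NN h + 1)
          (by omega) (by omega) (by omega) (hyp _ (by omega) (by omega))
      refine ⟨e', ⟨h2.1, by omega⟩, ?_⟩
      rw [V_low h2.1 h2.2]
      exact ((hsp g k (by omega) (by omega)).2 (2 * k + 1) e (by omega) hk'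
          (Or.inr rfl) (by omega) (by omega) h1.1 h1.2 h3.left).trans h3
  by_cases hbad : ∃ i, (g0 - 1) * NN h + 1 ≤ i ∧ i < (g1 - 1) * NN h + 1 ∧
      j - 1 ≤ (hits h d m ρ0 B (j - 1) i (i + 1)).card
  · -- pick a suitable bad copy
    have hb2 : ∃ g k i, g0 ≤ g ∧ g < g1 ∧ 1 ≤ k ∧ k ≤ 2 ^ h ∧
        j - 1 ≤ (hits h d m ρ0 B (j - 1) i (i + 1)).card ∧ (g0 - 1) * NN h + 1 ≤ i ∧
        i < (g1 - 1) * NN h + 1 ∧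
        (i = (g - 1) * NN h + 2 * k - 1 ∨ (i = (g - 1) * NN h + 2 * k ∧
          (hits h d m ρ0 B (j - 1) (i + 1) (i + 1 + 1)).card ≤ j - 1 - 1)) := by
      obtain ⟨i, hi1, hi2, hi3⟩ := hbad
      have hdm := Nat.div_add_mod (i - 1) (NN h)
      have hml := Nat.mod_lt (i - 1) (show 0 < NN h by omega)
      set c := (i - 1) / NN h
      set z := (i - 1) % NN h
      rw [Nat.mul_comm] at hdm
      have hc0 : g0 ≤ c + 1 := by
        by_contra hcon
        have : c * NN h + NN h ≤ (g0 - 1) * NN h := mulsucc (by omega)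
        omega
      have hc1 : c + 1 < g1 := by
        by_contra hcon
        have : (g1 - 1) * NN h ≤ c * NN h := Nat.mul_le_mul_right _ (by omega)
        omega
      have hcg : c * NN h + NN h ≤ (g1 - 1) * NN h := mulsucc (by omega)
      rcases Nat.even_or_odd' z with ⟨y, hy | hy⟩
      · exact ⟨c + 1, y + 1, i, hc0, hc1, by omega, by omega, hi3, hi1, hi2, Or.inl (by
          rw [Nat.add_sub_cancel]; omega)⟩
      · by_cases hn : (hits h d m ρ0 B (j - 1) (i + 1) (i + 1 + 1)).card ≤ j - 1 - 1
        · exact ⟨c + 1, y + 1, i, hc0, hc1, by omega, by omega, hi3, hi1, hi2, Or.inr ⟨by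
            rw [Nat.add_sub_cancel]; omega, hn⟩⟩
        · exact ⟨c + 1, y + 2, i + 1, hc0, hc1, by omega, by omega, by omega, by omega, by omega, Or.inl (by
            rw [Nat.add_sub_cancel]; omega)⟩
    obtain ⟨g, k, i, hg, hg', hk, hk', hi3, hi1, hi2, hik⟩ := hb2
    have hsubi : hits h d m ρ0 B (j - 1) i (i + 1) ⊆ hits h d m ρ0 B j g0 g1 :=
      hits_mono ((reg_mono hi1 hi2).trans (reg_up hj))
    have heqi := Finset.eq_of_subset_of_card_le hsubi (by omega)
    have hint : ∀ a b, (g0 - 1) * NN h + 1 ≤ a → b ≤ (g1 - 1) * NN h + 1 → ∀ ix,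
        ix ∈ hits h d m ρ0 B (j - 1) a b → ∃ x ∈ B ix, x ∈ Reg h d m ρ0 (j - 1) i (i + 1) := by
      intro a b ha hb ix hix
      have : ix ∈ hits h d m ρ0 B j g0 g1 := hits_mono ((reg_mono ha hb).trans (reg_up hj)) hix
      rw [← heqi] at this
      exact mem_hits.1 this
    have hpow := NNp hh (j - 1 - 1)
    have farL : ∀ b, 1 ≤ b → b + 1 ≤ i →
        (hits h d m ρ0 B (j - 1) ((g0 - 1) * NN h + 1) b).card ≤ j - 1 - 1 := by
      intro b hb1 hb
      have : hits h d m ρ0 B (j - 1) ((g0 - 1) * NN h + 1) b = ∅ := by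
        rw [Finset.eq_empty_iff_forall_notMem]
        intro ix hix
        obtain ⟨x, hx, hxr⟩ := hint _ _ le_rfl (by omega) ix hix
        obtain ⟨y, hy, hyr⟩ := mem_hits.1 hix
        have hlt' : (b - 1) * NN h ^ (j - 1 - 1) < (i - 1) * NN h ^ (j - 1 - 1) :=
          Nat.mul_lt_mul_of_pos_right (by omega) hpow
        have := (C.meet hy hx hyr.2.1 hyr.2.2.2.1 hyr.2.2.2.2 hxr.2.2.2.1 hxr.2.2.2.2 hlt'.le).1
        omega
      rw [this]
      simp
    have farR : ∀ a, i + 2 ≤ a →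
        (hits h d m ρ0 B (j - 1) a ((g1 - 1) * NN h + 1)).card ≤ j - 1 - 1 := by
      intro a ha
      have : hits h d m ρ0 B (j - 1) a ((g1 - 1) * NN h + 1) = ∅ := by
        rw [Finset.eq_empty_iff_forall_notMem]
        intro ix hix
        obtain ⟨x, hx, hxr⟩ := hint _ _ (by omega) le_rfl ix hix
        obtain ⟨y, hy, hyr⟩ := mem_hits.1 hix
        have hlt' : (i + 1 - 1) * NN h ^ (j - 1 - 1) < (a - 1) * NN h ^ (j - 1 - 1) :=
          Nat.mul_lt_mul_of_pos_right (by omega) hpow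
        have := (C.meet hx hy hxr.2.1 hxr.2.2.2.1 hxr.2.2.2.2 hyr.2.2.2.1 hyr.2.2.2.2 hlt'.le).1
        omega
      rw [this]
      simp
    have near : (hits h d m ρ0 B (j - 1) (i + 1) (i + 1 + 1)).card ≤ j - 1 - 1 → ∀ a, i + 1 ≤ a →
        (hits h d m ρ0 B (j - 1) a ((g1 - 1) * NN h + 1)).card ≤ j - 1 - 1 := by
      intro hn a ha
      refine (Finset.card_le_card ?_).trans hn
      intro ix hix
      have hix : ix ∈ hits h d m ρ0 B (j - 1) (i + 1) ((g1 - 1) * NN h + 1) :=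
        hits_mono (reg_mono ha le_rfl) hix
      obtain ⟨x, hx, hxr⟩ := hint _ _ (by omega) le_rfl ix hix
      obtain ⟨y, hy, hyr⟩ := mem_hits.1 hix
      obtain ⟨-, z, hz, z1, z2, z3, z4⟩ :=
        C.meet hx hy hxr.2.1 hxr.2.2.2.1 hxr.2.2.2.2 hyr.2.2.2.1 hyr.2.2.2.2 le_rfl
      refine mem_hits.2 ⟨z, hz, C.val ix z hz, by rw [z4]; exact C.h0, z3.trans hxr.2.2.1, z1.ge, ?_⟩
      rw [z2]
      exact Nat.mul_le_mul_right _ (by omega)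
    obtain ⟨e, he, hl⟩ := left g k hg hg' hk hk' (fun b hb hb' => farL b (by omega) (by omega))
    obtain ⟨e', he', hr⟩ := right g k hg hg' hk hk' (fun a ha ha' => by
      rcases hik with hik | ⟨hik, hn⟩
      · exact farR a (by omega)
      · exact near hn a (by omega))
    exact ⟨e, e', he, he', hl.trans hr⟩
  · push Not at hbad
    have step1 : ∀ g k, g0 ≤ g → g < g1 → 1 ≤ k → k + 1 ≤ 2 ^ h →
        Av (GR h d m) (Zb h d m ρ0 B) (lf h m j g k) (lf h m j g (k + 1)) := by
      intro g k hg hg' hk hk'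
      have hgg : g * NN h ≤ (g1 - 1) * NN h := Nat.mul_le_mul_right _ (by omega)
      have hgg' : (g - 1) * NN h + NN h = g * NN h := by
        rw [← Nat.succ_mul]; congr 1; omega
      have e3 : (g0 - 1) * NN h ≤ (g - 1) * NN h := Nat.mul_le_mul_right _ (by omega)
      have hb := hbad ((g - 1) * NN h + 2 * k) (by omega) (by omega)
      obtain ⟨e, e', h1, h2, h3⟩ := IH ((g - 1) * NN h + 2 * k) ((g - 1) * NN h + 2 * k + 1)
          (by omega) (by omega) (by omega) (by omega)
      have a1 := (hsp g k hg hg').2 (2 * k + 1) e' hk (by omega) (Or.inr rfl) (by omega) (by omega)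
        h2.1 h2.2 h3.right
      have a2 := (hsp g (k + 1) hg hg').2 (2 * k) e (by omega) (by omega) (Or.inl (by omega)) (by omega)
        (by omega) h1.1 h1.2 h3.left
      exact (a2.trans (h3.trans a1.symm)).symm
    have step2 : ∀ g, g0 ≤ g → g < g1 → ∀ k, k + 1 ≤ 2 ^ h →
        Av (GR h d m) (Zb h d m ρ0 B) (lf h m j g 1) (lf h m j g (k + 1)) := by
      intro g hg hg' k
      induction k with
      | zero => exact fun _ => Av.refl (hsp g 1 hg hg').1
      | succ k ih => exact fun hk => (ih (by omega)).trans (step1 g (k + 1) hg hg' (by omega) hk)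
    have step3 : ∀ z, g0 + z + 1 ≤ g1 →
        Av (GR h d m) (Zb h d m ρ0 B) (lf h m j g0 1) (lf h m j (g0 + z + 1) 1) := by
      intro z
      induction z with
      | zero =>
        intro hz
        have := step2 g0 le_rfl (by omega) (2 ^ h - 1) (by omega)
        rw [Nat.sub_add_cancel (by omega), lf_last hh hg0] at this
        exact this
      | succ z ih =>
        intro hz
        have := step2 (g0 + z + 1) (by omega) (by omega) (2 ^ h - 1) (by omega)
        rw [Nat.sub_add_cancel (by omega), lf_last hh (by omega)] at this
        exact (ih (by omega)).trans this
    have := step3 (g1 - g0 - 1) (by omega)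
    rw [show g0 + (g1 - g0 - 1) + 1 = g1 by omega] at this
    refine ⟨j, j, ⟨by omega, le_rfl⟩, ⟨by omega, le_rfl⟩, ?_⟩
    rw [V_top (m := m) hh hj (by omega), V_top (m := m) hh hj (by omega)]
    exact this

theorem Ctx.claim [Fintype ι] (C : Ctx h d m K ρ ρ0 B) :
    ∀ j, 1 ≤ j → j ≤ m → Claim h d m ρ0 B j := by
  intro j
  induction j with
  | zero => omega
  | succ j ih =>
    intro h1 h2
    by_cases hj : j = 0
    · subst hj
      exact C.claim_one h2
    · exact C.claim_step (by omega) h2 (ih (by omega) (by omega))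

/-- Main connectivity statement on the `G` side. -/
theorem Ctx.main [Fintype ι] (C : Ctx h d m K ρ ρ0 B) (hm : 2 ≤ m) (hc : Fintype.card ι < m) :
    ∃ s ∈ SsetR h d m, ∃ t ∈ TsetR h d m, Av (GR h d m) (Zb h d m ρ0 B) s t := by
  have hh := C.hh
  obtain ⟨e, e', h1, h2, h3⟩ := C.claim m (by omega) le_rfl 1 2 le_rfl (by norm_num) (by simp)
    ((Finset.card_le_univ _).trans (by omega))
  refine ⟨_, ?_, _, ?_, h3⟩
  · by_cases he : e = m
    · right
      rw [he, V_top (m := m) hh hm le_rfl]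
      rfl
    · left
      refine ⟨e, h1.1, by omega, ?_⟩
      rw [canon_V (by omega), V_low h1.1 (by omega)]
      simp
  · by_cases he : e' = m
    · right
      rw [he, V_top (m := m) hh hm (by omega), ← lf_last hh le_rfl]
      rfl
    · left
      refine ⟨e', h2.1, by omega, ?_⟩
      rw [canon_V (by omega), V_low h2.1 (by omega)]
      have := NN_succ h
      simp [this]

end Pf

set_option linter.unusedVariables false
set_option linter.unusedSimpArgs false

namespace Pf
open Ghdm MG

variable {h d m K : ℕ}

theorem ntb_succ (q i : ℕ) : natToBits (q + 1) i = natToBits q (i / 2) ++ [i.testBit 0] := by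
  simp only [natToBits, List.range_succ, List.map_append, List.map_cons, List.map_nil]
  congr 1
  · apply List.map_congr_left
    intro a ha
    rw [List.mem_range] at ha
    rw [show q + 1 - 1 - a = (q - 1 - a) + 1 by omega, Nat.testBit_succ]
  · simp

theorem fold_ntb (q : ℕ) : ∀ i, (natToBits q i).foldl (fun a b => 2 * a + if b then 1 else 0) 0 = i % 2 ^ q := by
  induction q with
  | zero => intro i; simp [natToBits, Nat.mod_one]
  | succ q ih =>
    intro i
    rw [ntb_succ, List.foldl_append, ih]
    simp only [List.foldl_cons, List.foldl_nil, Nat.testBit_zero]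
    rw [pow_succ, Nat.mul_comm (2 ^ q) 2, Nat.mod_mul]
    rcases Nat.mod_two_eq_zero_or_one i with h1 | h1 <;> simp [h1] <;> omega

theorem kOf_ntb {q i : ℕ} (hi : i < 2 ^ q) : kOf h (natToBits q i) = i * 2 ^ (h - q) + 1 := by
  unfold kOf
  rw [fold_ntb, length_ntb, Nat.mod_eq_of_lt hi]

theorem take_ntb {a x : ℕ} (ha : a ≤ h) : (natToBits h x).take a = natToBits a (x / 2 ^ (h - a)) := by
  apply List.ext_getElem
  · simp [natToBits]; omega
  · intro n h1 h2
    simp [natToBits] at h1 h2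
    simp only [natToBits, List.getElem_take, List.getElem_map, List.getElem_range,
      Nat.testBit_div_two_pow]
    congr 1
    omega

theorem ntb_inj {a x y : ℕ} (hx : x < 2 ^ a) (hy : y < 2 ^ a) (he : natToBits a x = natToBits a y) :
    x = y := by
  have := congrArg (List.foldl (fun a b => 2 * a + if b then 1 else 0) 0) he
  rwa [fold_ntb, fold_ntb, Nat.mod_eq_of_lt hx, Nat.mod_eq_of_lt hy] at this

def Uset (h d m q N : ℕ) : Set Raw :=
  ⋃ i ∈ Set.Icc 1 N, (SDeltaR h d m (natToBits q i) ∪ {leafLeftR h m (natToBits q i)})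

theorem mem_U {q N : ℕ} (hh : 2 ≤ h) (hN : N < 2 ^ q) (hqh : q ≤ h) {u : Raw} (hu : u ∈ Uset h d m q N) :
    ∃ i, 1 ≤ i ∧ i ≤ N ∧ ((∃ e, 1 ≤ e ∧ e ≤ m - 1 ∧ u = VsetElem h d (m - 1) (i * (2 * 2 ^ (h - q)) + 1) e) ∨
      ∃ x, u = .tree m 1 (natToBits h x) ∧ (x = i * 2 ^ (h - q) ∨ x = i * 2 ^ (h - q) - 1)) := by
  simp only [Uset, Set.mem_iUnion, Set.mem_Icc] at hu
  obtain ⟨i, ⟨h1, h2⟩, hu⟩ := hu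
  have hk := kOf_ntb (h := h) (q := q) (i := i) (by omega)
  have hc : ∀ p : List Bool, p.length = h → canon h m (.tree m 1 p) = .tree m 1 p := by
    intro p hp
    have : p ≠ [] := by rintro rfl; simp at hp; omega
    simp [canon, this]
  refine ⟨i, h1, h2, ?_⟩
  rcases hu with (⟨e, e1, e2, rfl⟩ | hu) | hu
  · left
    refine ⟨e, e1, e2, ?_⟩
    rw [canon_V (by omega), hk]
    congr 1
    have : i * (2 * 2 ^ (h - q)) = 2 * (i * 2 ^ (h - q)) := by ring
    omega
  · right
    rw [Set.mem_singleton_iff, hc _ (length_leafPos _ _), hk] at hu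
    exact ⟨_, hu, Or.inl (by simp)⟩
  · right
    rw [Set.mem_singleton_iff, leafLeftR, hc _ (length_leafPos _ _), hk] at hu
    exact ⟨_, hu, Or.inr (by simp)⟩

theorem eta_U {q N : ℕ} (hh : 2 ≤ h) (hN : N < 2 ^ q) (hqh : q ≤ h) (hK : K ≤ d) {u : Raw}
    (hu : u ∈ Uset h d m q N) : eta h d K u = 0 ∧ dep h u = h := by
  obtain ⟨i, h1, h2, ⟨e, e1, e2, rfl⟩ | ⟨x, rfl, hx⟩⟩ := mem_U hh hN hqh hu
  · exact ⟨eta_V hK _ _ _, dep_V (by omega) _ _ _⟩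
  · simp [eta, dep, length_ntb]

theorem div_aux {i c x : ℕ} (hc : 1 ≤ c) (hi : 1 ≤ i) (hx : x = i * (2 * c) ∨ x = i * (2 * c) - 1) :
    (x = i * (2 * c) ∧ x / c = 2 * i) ∨ (x = i * (2 * c) - 1 ∧ x / c = 2 * i - 1) := by
  rcases hx with rfl | rfl
  · left
    refine ⟨rfl, ?_⟩
    rw [← Nat.mul_assoc, Nat.mul_div_cancel _ hc, Nat.mul_comm]
  · right
    refine ⟨rfl, ?_⟩
    obtain ⟨a, rfl⟩ : ∃ a, i = a + 1 := ⟨i - 1, by omega⟩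
    have : (a + 1) * (2 * c) - 1 = (c - 1) + (2 * a + 1) * c := by
      have : (a + 1) * (2 * c) = c + (2 * a + 1) * c := by ring
      omega
    rw [this, Nat.add_mul_div_right _ _ hc, Nat.div_eq_of_lt (by omega)]
    omega

theorem lab_U {q N : ℕ} (hh : 2 ≤ h) (hN : N < 2 ^ q) (hqK : q + 1 + K ≤ h) (h1K : 1 ≤ K) (hK : 2 * K ≤ d)
    {u u' : Raw} (hu : u ∈ Uset h d m q N) (hu' : u' ∈ Uset h d m q N) (hm : 1 ≤ m)
    (hv : Valid h d m u) (hv' : Valid h d m u') (he : lab h d K u = lab h d K u') : u = u' := by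
  have hl := lev_lab_eq u (eta_U hh hN (by omega) (by omega) hu).1 h1K hv
  have hl' := lev_lab_eq u' (eta_U hh hN (by omega) (by omega) hu').1 h1K hv'
  rw [he, hl'] at hl
  have hc : 1 ≤ 2 ^ (h - q - 1) := Nat.one_le_two_pow
  have hc2 : 2 ^ (h - q) = 2 * 2 ^ (h - q - 1) := by
    rw [← pow_succ']; congr 1; omega
  obtain ⟨i, h1, h2, ⟨e, e1, e2, rfl⟩ | ⟨x, rfl, hx⟩⟩ := mem_U hh hN (by omega) hu <;>
  obtain ⟨i', h1', h2', ⟨e', e1', e2', rfl⟩ | ⟨x', rfl, hx'⟩⟩ := mem_U hh hN (by omega) hu'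
  · rw [lev_V, lev_V] at hl
    subst hl
    have p1 := pos_V (d := d) hh (g := i * (2 * 2 ^ (h - q)) + 1) e1 e2
    have p2 := pos_V (d := d) hh (g := i' * (2 * 2 ^ (h - q)) + 1) e1 e2
    have l1 := (point_lab hh h1K hK (by omega) _ hv (p1.1.trans p1.2.symm)).2.1
    have l2 := (point_lab hh h1K hK (by omega) _ hv' (p2.1.trans p2.2.symm)).2.1
    rw [p1.1] at l1
    rw [p2.1] at l2
    rw [he, l2] at l1
    simp only [Nat.add_sub_cancel] at l1
    have := Nat.eq_of_mul_eq_mul_right (NNp hh _) l1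
    rw [this]
  · rw [lev_V] at hl
    simp only [lev] at hl
    omega
  · rw [lev_V] at hl
    simp only [lev] at hl
    omega
  · simp only [lab, lab0, lt_irrefl, and_false, if_false, Raw.tree.injEq, true_and] at he
    have h3 := congrArg (List.take (q + 1)) he
    rw [List.take_take, List.take_take, Nat.min_eq_left (by omega), take_ntb (by omega),
      take_ntb (by omega), show h - (q + 1) = h - q - 1 by omega] at h3
    rw [hc2] at hx hx'
    have d1 := div_aux hc h1 hx
    have d2 := div_aux hc h1' hx'
    have hp : 2 ^ (q + 1) = 2 * 2 ^ q := by ring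
    have h4 := ntb_inj (by omega) (by omega) h3
    have hii : i = i' := by omega
    subst hii
    have : x = x' := by omega
    rw [this]

theorem dep_S (hh : 2 ≤ h) {s : Raw} (hs : s ∈ SsetR h d m ∨ s ∈ TsetR h d m) : dep h s = h := by
  have h1 : ∀ jv g e, dep h (canon h m (VsetElem h d jv g e)) = h := by
    intro jv g e
    rw [canon_V (by omega), dep_V (by omega)]
  rcases hs with (⟨e, -, -, rfl⟩ | hs) | (⟨e, -, -, rfl⟩ | hs)
  · exact h1 _ _ _
  · rw [Set.mem_singleton_iff] at hs
    rw [hs]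
    exact dep_lf hh _ _ _
  · exact h1 _ _ _
  · rw [Set.mem_singleton_iff] at hs
    rw [hs]
    exact dep_lf hh _ _ _

theorem U_far {q N : ℕ} (hh : 2 ≤ h) (hN : N < 2 ^ q) (hqK : q + 1 + K ≤ h) (h1K : 1 ≤ K) (hK : 2 * K ≤ d)
    (hm : 1 ≤ m) {u u' : Verts h d m} (hu : u.1 ∈ Uset h d m q N) (hu' : u'.1 ∈ Uset h d m q N)
    (hne : u ≠ u') : ((2 * K : ℕ) : ℕ∞) ≤ (Ghdm.G h d m).edist u u' := by
  refine le_iInf fun p => ?_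
  obtain ⟨a, b, c | c⟩ := walk_eta hh h1K hK (by omega) (p.map (homG h d m))
  · exact absurd (Subtype.ext (lab_U hh hN hqK h1K hK hu hu' hm u.2 u'.2 c.2.2)) hne
  · have e1 : eta h d K (homG h d m u) = 0 := (eta_U hh hN (by omega) (show K ≤ d by omega) hu).1
    have e2 : eta h d K (homG h d m u') = 0 := (eta_U hh hN (by omega) (show K ≤ d by omega) hu').1
    rw [Walk.length_map, e1, e2] at c
    exact_mod_cast (by omega : 2 * K ≤ p.length)

theorem dep_far (hh : 2 ≤ h) (hd : 1 ≤ d) {u v : Verts h d m} :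
    ((dep h u.1 : ℕ) : ℕ∞) ≤ dep h v.1 + (Ghdm.G h d m).edist u v := by
  by_cases ht : (Ghdm.G h d m).edist u v = ⊤
  · rw [ht]; simp
  · obtain ⟨p, hp⟩ := exists_walk_of_edist_ne_top ht
    have := walk_dep hh hd (p.map (homG h d m))
    rw [Walk.length_map] at this
    rw [← hp]
    exact_mod_cast this

theorem finite_Verts (h d m : ℕ) : Finite (Verts h d m) := by
  let T := NN h ^ m
  let f1 : Fin ((d + 1) * NN h ^ (m - 1) + 1) → Raw := fun k => .path k
  let L := {p : List Bool | p.length ≤ h}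
  have : Finite L := List.finite_length_le Bool h
  let X := Finset.range (m + 1) |>.sup (fun j => NN h ^ (m - j))
  let f2 : Fin (m + 1) × Fin (X + 1) × L → Raw := fun x => .tree x.1 x.2.1 x.2.2
  let f3 : Fin (m + 1) × Fin (X + 1) × Fin (2 ^ h + 1) × Fin (2 ^ (h + 1) + 1) × Fin (m + 1) × Fin (d + 1) → Raw :=
    fun x => .spine x.1 x.2.1 x.2.2.1 x.2.2.2.1 x.2.2.2.2.1 x.2.2.2.2.2
  have hX : ∀ j, j ≤ m → NN h ^ (m - j) ≤ X := fun j hj =>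
    Finset.le_sup (f := fun j => NN h ^ (m - j)) (Finset.mem_range.2 (by omega))
  have hfin : (Set.range f1 ∪ Set.range f2 ∪ Set.range f3).Finite :=
    ((Set.finite_range _).union (Set.finite_range _)).union (Set.finite_range _)
  refine (hfin.subset ?_).to_subtype
  intro x hx
  cases x with
  | path k => exact Or.inl (Or.inl ⟨⟨k, Nat.lt_succ_of_le hx⟩, rfl⟩)
  | tree j i p =>
    obtain ⟨a1, a2, a3, a4, a5, -⟩ := hx
    exact Or.inl (Or.inr ⟨(⟨j, by omega⟩, ⟨i, by have := hX j a2; omega⟩, ⟨p, a5⟩), rfl⟩)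
  | spine j i k t e s =>
    obtain ⟨a1, a2, a3, a4, a5, a6, a7, a8, a9, a10, a11, a12, a13⟩ := hx
    exact Or.inr ⟨(⟨j, by omega⟩, ⟨i, by have := hX j a2; omega⟩, ⟨k, by omega⟩, ⟨t, by omega⟩,
      ⟨e, by omega⟩, ⟨s, by omega⟩), rfl⟩

end Pf

set_option linter.unusedVariables false
set_option linter.unusedSimpArgs false

namespace Pf
open Ghdm MG

section contract
variable {W : Type*}

def Ctr (H : SimpleGraph W) (π : W → W) (F : Set W) : SimpleGraph W where
  Adj x y := x ≠ y ∧ ∃ v w, v ∈ F ∧ w ∈ F ∧ H.Adj v w ∧ π v = x ∧ π w = y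
  symm := ⟨fun x y hh => by
    obtain ⟨h0, v, w, h1, h2, h3, h4, h5⟩ := hh
    exact ⟨h0.symm, w, v, h2, h1, h3.symm, h5, h4⟩⟩
  loopless := ⟨fun x hh => hh.1 rfl⟩

theorem ctr_fin (H : SimpleGraph W) (π : W → W) {F : Set W} (hF : F.Finite) :
    (Ctr H π F).edgeSet.Finite := by
  refine Set.Finite.subset (((hF.image π).prod (hF.image π)).image (fun x => s(x.1, x.2))) ?_
  intro e
  induction e with
  | _ x y =>
    rintro ⟨-, v, w, h1, h2, -, h4, h5⟩
    exact ⟨(x, y), ⟨⟨v, h1, h4⟩, ⟨w, h2, h5⟩⟩, rfl⟩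

theorem ctr_push {H : SimpleGraph W} {π : W → W} {F Z : Set W} {a b : W} (p : H.Walk a b)
    (hp : ∀ v ∈ p.support, v ∈ F ∧ π v ∉ Z) : Av (Ctr H π F) Z (π a) (π b) := by
  induction p with
  | nil => exact Av.refl (hp _ (by simp)).2
  | cons hab p ih =>
    rename_i u v w
    have h1 := hp u (by simp)
    have h2 := hp v (by simp)
    have h3 := ih (fun z hz => hp z (by simp [hz]))
    by_cases he : π u = π v
    · rw [he]; exact h3
    · have h4 : (Ctr H π F).Adj (π u) (π v) := ⟨he, u, v, h1.1, h2.1, hab, rfl, rfl⟩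
      exact (Av.step (Av.refl h1.2) h4 h2.2).trans h3

theorem ctr_lift {H : SimpleGraph W} {π : W → W} {F R : Set W} (hFR : ∀ v ∈ F, v ∉ R)
    (hfib : ∀ v w, π v = π w → v ∉ R → w ∉ R → ∃ p : H.Walk v w, ∀ z ∈ p.support, z ∉ R ∧ π z = π v)
    {x y : W} (p : (Ctr H π F).Walk x y) :
    ∀ a b, π a = x → π b = y → a ∉ R → b ∉ R →
      ∃ q : H.Walk a b, ∀ z ∈ q.support, z ∉ R ∧ π z ∈ p.support := by
  induction p with
  | nil =>
    intro a b ha hb h1 h2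
    obtain ⟨q, hq⟩ := hfib a b (ha.trans hb.symm) h1 h2
    refine ⟨q, fun z hz => ⟨(hq z hz).1, ?_⟩⟩
    rw [(hq z hz).2, ha]; simp
  | cons hab p ih =>
    rename_i x' y' z'
    intro a b ha hb h1 h2
    obtain ⟨h0, v, w, h3, h4, h5, h6, h7⟩ := id hab
    obtain ⟨q1, hq1⟩ := hfib a v (ha.trans h6.symm) h1 (hFR v h3)
    obtain ⟨q2, hq2⟩ := ih w b h7 hb (hFR w h4) h2
    refine ⟨q1.append (Walk.cons h5 q2), fun z hz => ?_⟩
    rw [Walk.mem_support_append_iff, Walk.support_cons, List.mem_cons] at hz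
    rcases hz with hz | rfl | hz
    · refine ⟨(hq1 z hz).1, ?_⟩
      rw [(hq1 z hz).2, ha]; simp
    · refine ⟨hFR z h3, ?_⟩
      rw [h6]; simp
    · refine ⟨(hq2 z hz).1, ?_⟩
      rw [Walk.support_cons]
      exact List.mem_cons_of_mem _ (hq2 z hz).2

theorem contract {H : SimpleGraph W} {π : W → W} {F R : Set W} (hF : F.Finite)
    (hfib : ∀ v w, π v = π w → v ∉ R → w ∉ R → ∃ p : H.Walk v w, ∀ z ∈ p.support, z ∉ R ∧ π z = π v)
    {A B : Set W} (hA : ∀ a ∈ A, a ∉ R) (hB : ∀ a ∈ B, a ∉ R) (k : ℕ)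
    (hsep : ∀ Z : Finset W, Z.card < k → ∃ a ∈ A, ∃ b ∈ B, ∃ p : H.Walk a b,
      ∀ v ∈ p.support, v ∈ F ∧ v ∉ R ∧ π v ∉ Z) :
    ∃ (a b : Fin k → W) (P : ∀ i : Fin k, H.Walk (a i) (b i)), (∀ i, (P i).IsPath) ∧
      (∀ i, a i ∈ A ∧ b i ∈ B) ∧ (∀ i, ∀ v ∈ (P i).support, v ∉ R) ∧
      ∀ i j v w, v ∈ (P i).support → w ∈ (P j).support → π v = π w → i = j := by
  classical
  have hmen : Link (Ctr H π (F \ R)) (π '' A) (π '' B) k := by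
    refine menger _ (ctr_fin H π (hF.subset Set.sdiff_subset)) _ _ k ?_
    intro Z hZ
    obtain ⟨a, ha, b, hb, p, hp⟩ := hsep Z hZ
    refine ⟨_, ⟨a, ha, rfl⟩, _, ⟨b, hb, rfl⟩, ctr_push p fun v hv => ?_⟩
    exact ⟨⟨(hp v hv).1, (hp v hv).2.1⟩, by simpa using (hp v hv).2.2⟩
  obtain ⟨x, y, Q, -, hxy, hdis⟩ := hmen
  choose a ha hax using fun i => (hxy i).1
  choose b hb hby using fun i => (hxy i).2
  choose q hq using fun i => ctr_lift (R := R) (fun v hv => hv.2) hfib (Q i) (a i) (b i) (hax i) (hby i)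
    (hA _ (ha i)) (hB _ (hb i))
  refine ⟨a, b, fun i => (q i).bypass, fun i => (q i).bypass_isPath, fun i => ⟨ha i, hb i⟩, ?_, ?_⟩
  · intro i v hv
    exact (hq i v ((q i).support_bypass_subset_support hv)).1
  · intro i j v w hv hw he
    have h1 := (hq i v ((q i).support_bypass_subset_support hv)).2
    have h2 := (hq j w ((q j).support_bypass_subset_support hw)).2
    rw [← he] at h2
    exact hdis i j _ h1 h2

end contract

theorem ball_walk {W : Type*} {H : SimpleGraph W} {a z : W} {r : ℕ} (hz : H.edist a z ≤ r) :
    ∃ p : H.Walk a z, p.length ≤ r ∧ ∀ v ∈ p.support, H.edist a v ≤ r := by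
  classical
  have ht : H.edist a z ≠ ⊤ := fun hc => by rw [hc] at hz; simp at hz
  obtain ⟨p, hp⟩ := exists_walk_of_edist_ne_top ht
  have hl : p.length ≤ r := by rw [← hp] at hz; exact_mod_cast hz
  refine ⟨p, hl, fun v hv => ?_⟩
  refine (edist_le (p.takeUntil v hv)).trans ?_
  have := p.length_takeUntil_le_length hv
  exact_mod_cast this.trans hl

theorem exists_pi {V W : Type*} {H : SimpleGraph W} (f : V → W) (U : Set V) (r : ℕ) (R : Set W)
    (hd : ∀ u ∈ U, ∀ u' ∈ U, ∀ z, H.edist (f u) z ≤ r → H.edist (f u') z ≤ r → u = u')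
    (hR : ∀ u ∈ U, ∀ z, H.edist (f u) z ≤ r → z ∉ R) :
    ∃ π : W → W, (∀ u ∈ U, ∀ z, H.edist (f u) z ≤ r → π z = f u) ∧
      (∀ z, π z = z ∨ ∃ u ∈ U, H.edist (f u) z ≤ r ∧ π z = f u) ∧
      (∀ v w, π v = π w → v ∉ R → w ∉ R → ∃ p : H.Walk v w, ∀ z ∈ p.support, z ∉ R ∧ π z = π v) := by
  classical
  let π : W → W := fun z => if hz : ∃ u ∈ U, H.edist (f u) z ≤ r then f hz.choose else z
  have h1 : ∀ u ∈ U, ∀ z, H.edist (f u) z ≤ r → π z = f u := by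
    intro u hu z hz
    have he : ∃ u ∈ U, H.edist (f u) z ≤ r := ⟨u, hu, hz⟩
    have : π z = f he.choose := dif_pos he
    rw [this, hd _ he.choose_spec.1 u hu z he.choose_spec.2 hz]
  have h2 : ∀ z, π z = z ∨ ∃ u ∈ U, H.edist (f u) z ≤ r ∧ π z = f u := by
    intro z
    by_cases he : ∃ u ∈ U, H.edist (f u) z ≤ r
    · obtain ⟨u, hu, hz⟩ := he
      exact Or.inr ⟨u, hu, hz, h1 u hu z hz⟩
    · exact Or.inl (dif_neg he)
  refine ⟨π, h1, h2, ?_⟩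
  have key : ∀ v u, u ∈ U → H.edist (f u) v ≤ r → ∀ w, π w = f u → H.edist (f u) w ≤ r := by
    intro v u hu hv w hw
    rcases h2 w with h | ⟨u', hu', h3, h4⟩
    · rw [← hw, h]; simp
    · rw [← hw, h4]; exact h3
  intro v w he hv hw
  have main : ∀ v w, π v = π w → (∃ u ∈ U, H.edist (f u) v ≤ r ∧ π v = f u) →
      ∃ p : H.Walk v w, ∀ z ∈ p.support, z ∉ R ∧ π z = π v := by
    rintro v w he ⟨u, hu, h3, h4⟩
    have h5 := key v u hu h3 w (he ▸ h4)
    obtain ⟨p, -, hp⟩ := ball_walk h3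
    obtain ⟨q, -, hq⟩ := ball_walk h5
    refine ⟨p.reverse.append q, fun z hz => ?_⟩
    rw [Walk.mem_support_append_iff, Walk.support_reverse, List.mem_reverse] at hz
    have h6 := hz.elim (hp z) (hq z)
    exact ⟨hR u hu z h6, by rw [h4, h1 u hu z h6]⟩
  rcases h2 v with h | h
  · rcases h2 w with h' | h'
    · have : v = w := by rw [← h, ← h', he]
      subst this
      refine ⟨Walk.nil, fun z hz => ?_⟩
      simp at hz
      subst hz
      exact ⟨hv, rfl⟩
    · obtain ⟨p, hp⟩ := main w v he.symm h'
      exact ⟨p.reverse, fun z hz => by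
        have := hp z (by simpa using hz)
        exact ⟨this.1, this.2.trans he.symm⟩⟩
  · exact main v w he h

end Pf

set_option linter.unusedVariables false
set_option linter.unusedSimpArgs false

namespace Pf
open Ghdm MG

theorem qi_lower {V W : Type*} {G : SimpleGraph V} {H : SimpleGraph W} {M A : ℕ} {f : V → W}
    (hf : CGT.IsQI M A G H f) {u v : V} {w : W} {c c' b : ℕ} (h1 : H.edist (f u) w ≤ c)
    (h2 : H.edist (f v) w ≤ c') (hb : M * (c + c') + M * A ≤ b) : G.edist u v ≤ b := by
  have h3 : H.edist (f u) (f v) ≤ ((c + c' : ℕ) : ℕ∞) := by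
    refine H.edist_triangle.trans (b := H.edist (f u) w + H.edist w (f v)) ?_
    rw [H.edist_comm (u := w)]
    push_cast
    exact add_le_add h1 h2
  refine (hf.lower u v).trans ?_
  refine (add_le_add_left (mul_le_mul_right h3 (M : ℕ∞)) _).trans ?_
  exact_mod_cast hb

theorem small_ball {h d m ρ : ℕ} (c : Verts h d m) :
    Small h d m ρ (Subtype.val '' {v : Verts h d m | (Ghdm.G h d m).edist c v ≤ ρ}) := by
  rintro _ ⟨x, hx, rfl⟩ _ ⟨y, hy, rfl⟩
  obtain ⟨p, hp, hp'⟩ := ball_walk hx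
  obtain ⟨q, hq, hq'⟩ := ball_walk hy
  have key : ∃ p' : (GR h d m).Walk (homG h d m x) (homG h d m y), p'.length ≤ 2 * ρ ∧
      ∀ v ∈ p'.support, v ∈ Subtype.val '' {v : Verts h d m | (Ghdm.G h d m).edist c v ≤ ρ} := by
    refine ⟨(p.reverse.append q).map (homG h d m), ?_, ?_⟩
    · rw [Walk.length_map, Walk.length_append, Walk.length_reverse]
      omega
    · intro v hv
      rw [Walk.support_map, List.mem_map] at hv
      obtain ⟨z, hz, rfl⟩ := hv
      rw [Walk.mem_support_append_iff, Walk.support_reverse, List.mem_reverse] at hz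
      exact ⟨z, hz.elim (hp' z) (hq' z), rfl⟩
  exact key

theorem push_walk {h d m : ℕ} {W : Type*} {H : SimpleGraph W} (f : Verts h d m → W)
    (w : ∀ x y, H.Walk (f x) (f y)) {Z : Set Raw} {x y : Raw} (p : (GR h d m).Walk x y) :
    (∀ v ∈ p.support, v ∉ Z) → ∀ (hx : Valid h d m x) (hy : Valid h d m y),
    ∃ q : H.Walk (f ⟨x, hx⟩) (f ⟨y, hy⟩), ∀ v ∈ q.support,
      ∃ a b, a.1 ∉ Z ∧ ((Ghdm.G h d m).Adj a b ∧ v ∈ (w a b).support ∨ v = f a) := by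
  induction p with
  | nil =>
    intro hp hx hy
    refine ⟨Walk.nil, fun v hv => ?_⟩
    rw [Walk.support_nil, List.mem_singleton] at hv
    exact ⟨_, ⟨_, hx⟩, hp _ (by simp), Or.inr hv⟩
  | cons hab p ih =>
    rename_i a b c
    intro hp hx hy
    obtain ⟨h1, h2, h3, h4⟩ := id hab
    have hadj : (Ghdm.G h d m).Adj ⟨a, hx⟩ ⟨b, h2⟩ := by
      simp only [Ghdm.G, SimpleGraph.comap_adj, SimpleGraph.fromRel_adj]
      exact ⟨h3, h4⟩
    obtain ⟨q, hq⟩ := ih (fun v hv => hp v (by simp [hv])) h2 hy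
    refine ⟨(w ⟨a, hx⟩ ⟨b, h2⟩).append q, fun v hv => ?_⟩
    rw [Walk.mem_support_append_iff] at hv
    rcases hv with hv | hv
    · exact ⟨_, _, hp a (by simp), Or.inl ⟨hadj, hv⟩⟩
    · exact hq v hv

theorem main {M A r N q d h m ρ ρ0 : ℕ} (hh : 2 ≤ h) (hN : N < 2 ^ q) (hm : 2 ≤ m) (hAr : A ≤ r)
    (hρ : ρ = M * (r + M + 2 * A)) (hρ0 : ρ0 = 2 * ρ + M * (M * q + M + 3 * A))
    (n1 : 2 * (2 * ρ + 1) ≤ d) (n2 : q + 1 + (2 * ρ + 1) ≤ h) (n3 : ρ0 < h)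
    (n4 : M * (M * q + A + r) + M * A < h) (n5 : M * (r + r) + M * A < 2 * (2 * ρ + 1))
    {V' : Type} (H : SimpleGraph V') (hH : H.Connected)
    (f : Verts h d m → V') (hf : CGT.IsQI M A (Ghdm.G h d m) H f) :
    ∃ (a b : Fin m → V') (P : ∀ i : Fin m, H.Walk (a i) (b i)),
      (∀ i, (P i).IsPath) ∧
      (∀ i, a i ∈ f '' lift (SsetR h d m) ∧ b i ∈ f '' lift (TsetR h d m)) ∧
      (∀ i, ∀ v ∈ (P i).support, v ∉ CGT.gBall H (f '' lift {RootR m}) (M * q + A)) ∧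
      (∀ i j, i ≠ j → ∀ v, v ∈ (P i).support → v ∉ (P j).support) ∧
      (∀ u : Verts h d m, u.1 ∈ Uset h d m q N → ∀ i j : Fin m,
          (∃ v ∈ (P i).support, v ∈ CGT.gBall H {f u} r) →
          (∃ v ∈ (P j).support, v ∈ CGT.gBall H {f u} r) → i = j) := by
  classical
  have := finite_Verts h d m
  set R := CGT.gBall H (f '' lift {RootR m}) (M * q + A) with hRdef
  -- depth of points whose image is near the root ball
  have hdepR : ∀ (u : Verts h d m) (c b : ℕ) (z : V'), z ∈ R → H.edist (f u) z ≤ c →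
      M * (c + (M * q + A)) + M * A ≤ b → dep h u.1 ≤ b := by
    rintro u c b z ⟨_, ⟨x, hx, rfl⟩, hz⟩ h1 hb
    have h2 := qi_lower hf h1 hz hb
    have h3 := dep_far hh (by omega) (u := u) (v := x)
    have hx' : x.1 = RootR m := hx
    rw [hx'] at h3
    have h4 : dep h (RootR m) = 0 := by simp [RootR, dep]
    rw [h4] at h3
    have h5 := h3.trans (add_le_add_right h2 _)
    have h6 : dep h u.1 ≤ 0 + b := by exact_mod_cast h5
    omega
  let U : Set (Verts h d m) := {u | u.1 ∈ Uset h d m q N}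
  have hdisj : ∀ u ∈ U, ∀ u' ∈ U, ∀ z, H.edist (f u) z ≤ r → H.edist (f u') z ≤ r → u = u' := by
    intro u hu u' hu' z h1 h2
    by_contra hne
    have h3 := U_far hh hN n2 (by omega) n1 (by omega) hu hu' hne
    have h4 := h3.trans (qi_lower hf h1 h2 le_rfl)
    have h5 : 2 * (2 * ρ + 1) ≤ M * (r + r) + M * A := by exact_mod_cast h4
    omega
  have hUR : ∀ u ∈ U, ∀ z, H.edist (f u) z ≤ r → z ∉ R := by
    intro u hu z h1 h2
    have h3 := hdepR u r _ z h2 h1 le_rfl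
    rw [(eta_U (K := 0) hh hN (by omega) (by omega) hu).2] at h3
    rw [Nat.add_comm r] at h3
    omega
  have hSR : ∀ s : Verts h d m, (s.1 ∈ SsetR h d m ∨ s.1 ∈ TsetR h d m) → f s ∉ R := by
    intro s hs h2
    have h3 := hdepR s 0 _ (f s) h2 (by simp) le_rfl
    rw [dep_S hh hs] at h3
    have : M * (0 + (M * q + A)) ≤ M * (M * q + A + r) := Nat.mul_le_mul_left _ (by omega)
    omega
  obtain ⟨π, hπ1, hπ2, hfib⟩ := exists_pi f U r R hdisj hUR
  -- chosen walks
  have hw : ∀ x y, ∃ p : H.Walk (f x) (f y), (Ghdm.G h d m).Adj x y →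
      ∀ v ∈ p.support, H.edist (f x) v ≤ ((M + A : ℕ) : ℕ∞) := by
    intro x y
    by_cases hxy : (Ghdm.G h d m).Adj x y
    · have h1 : H.edist (f x) (f y) ≤ ((M + A : ℕ) : ℕ∞) := by
        have h2 := hf.upper x y
        rw [edist_eq_one_iff_adj.2 hxy] at h2
        simpa using h2
      obtain ⟨p, -, hp⟩ := ball_walk h1
      exact ⟨p, fun _ => hp⟩
    · obtain ⟨p⟩ := hH.preconnected (f x) (f y)
      exact ⟨p, fun hc => absurd hc hxy⟩
  choose w hw using hw
  let F : Set V' := ⋃ x, ⋃ y, {v | v ∈ (w x y).support}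
  have hF : F.Finite :=
    Set.finite_iUnion fun x => Set.finite_iUnion fun y => (w x y).support.finite_toSet
  have hsep : ∀ Z : Finset V', Z.card < m → ∃ a ∈ f '' lift (SsetR h d m),
      ∃ b ∈ f '' lift (TsetR h d m), ∃ p : H.Walk a b,
      ∀ v ∈ p.support, v ∈ F ∧ v ∉ R ∧ π v ∉ Z := by
    intro Z hZ
    have hcen : ∀ x : V', ∃ c : Verts h d m, ∀ z v, π z = x → H.edist (f v) z ≤ ((M + A : ℕ) : ℕ∞) →
        (Ghdm.G h d m).edist c v ≤ ρ := by
      intro x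
      by_cases hx : ∃ u ∈ U, f u = x
      · obtain ⟨u, hu, rfl⟩ := hx
        refine ⟨u, fun z v hz hv => qi_lower (c := r) hf ?_ hv ?_⟩
        · rcases hπ2 z with h1 | ⟨u', -, h2, h3⟩
          · rw [← hz, h1]; simp
          · rw [← hz, h3]; exact h2
        · rw [hρ, ← Nat.mul_add]
          exact Nat.mul_le_mul_left _ (by omega)
      · obtain ⟨c, hc⟩ := hf.dense x
        rw [H.edist_comm] at hc
        refine ⟨c, fun z v hz hv => ?_⟩
        rcases hπ2 z with h1 | ⟨u', hu', h2, h3⟩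
        · have : z = x := h1.symm.trans hz
          subst this
          refine qi_lower hf hc hv ?_
          rw [hρ, ← Nat.mul_add]
          exact Nat.mul_le_mul_left _ (by omega)
        · exact absurd ⟨u', hu', h3.symm.trans hz⟩ hx
    choose c hc using hcen
    let B : Z → Set Raw := fun x =>
      Subtype.val '' {v : Verts h d m | (Ghdm.G h d m).edist (c x.1) v ≤ ρ}
    have C : Ctx h d m (2 * ρ + 1) ρ ρ0 B :=
      { hh := hh, hρ := by omega, hK := n1, hKh := by omega, hρ0 := by omega, h0 := n3
        small := fun i => small_ball _
        val := by
          rintro i _ ⟨v, -, rfl⟩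
          exact v.2 }
    obtain ⟨s, hs, t, ht, p, hp⟩ := C.main hm (by simpa using hZ)
    have hval : ∀ x, x ∉ Zb h d m ρ0 B → Valid h d m x ∧ ρ0 < dep h x ∧ ∀ i, x ∉ B i := by
      intro x hx
      by_contra hc
      exact hx hc
    have hvs := (hval s (hp s p.start_mem_support)).1
    have hvt := (hval t (hp t p.end_mem_support)).1
    obtain ⟨Q, hQ⟩ := push_walk f w p hp hvs hvt
    refine ⟨_, ⟨⟨s, hvs⟩, hs, rfl⟩, _, ⟨⟨t, hvt⟩, ht, rfl⟩, Q, fun v hv => ?_⟩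
    obtain ⟨a, b, ha, hab⟩ := hQ v hv
    obtain ⟨-, ha2, ha3⟩ := hval _ ha
    have hav : H.edist (f a) v ≤ ((M + A : ℕ) : ℕ∞) := by
      rcases hab with ⟨h1, h2⟩ | rfl
      · exact hw a b h1 v h2
      · simp
    refine ⟨?_, ?_, ?_⟩
    · rcases hab with ⟨h1, h2⟩ | rfl
      · exact Set.mem_iUnion.2 ⟨a, Set.mem_iUnion.2 ⟨b, h2⟩⟩
      · exact Set.mem_iUnion.2 ⟨a, Set.mem_iUnion.2 ⟨a, (w a a).start_mem_support⟩⟩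
    · intro hvR
      have h3 := hdepR a _ ρ0 v hvR hav (by
        rw [hρ0, ← Nat.mul_add]
        have : M * (M + A + (M * q + A) + A) ≤ M * (M * q + M + 3 * A) :=
          Nat.mul_le_mul_left _ (by omega)
        omega)
      omega
    · intro hvZ
      exact ha3 ⟨π v, hvZ⟩ ⟨a, hc (π v) v a rfl hav, rfl⟩
  obtain ⟨a, b, P, h1, h2, h3, h4⟩ := contract hF hfib
    (by rintro _ ⟨s, hs, rfl⟩; exact hSR s (Or.inl hs))
    (by rintro _ ⟨s, hs, rfl⟩; exact hSR s (Or.inr hs)) m hsep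
  refine ⟨a, b, P, h1, h2, h3, ?_, ?_⟩
  · intro i j hij v hv hv'
    exact hij (h4 i j v v hv hv' rfl)
  · rintro u hu i j ⟨v, hv, _, rfl, hvu⟩ ⟨v', hv', _, rfl, hvu'⟩
    exact h4 i j v v' hv hv' ((hπ1 u hu v hvu).trans (hπ1 u hu v' hvu').symm)

theorem numerics {M A n r N q d h m : ℕ} (hM : 1 ≤ M) (hn : 2 ≤ n)
    (hr : r = M ^ 2 * (3 * A + 1) + 2 * A + M)
    (hN : N = n * (n - 1) / 2)
    (hq : q = Nat.clog 2 (N + 1))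
    (hd : d = 4 * r * M * ((2 * r + q) * M + (6 * r + 1) * A + 1))
    (hh : h = d + 2) (hm : m = n ^ 2) :
    2 ≤ h ∧ N < 2 ^ q ∧ 2 ≤ m ∧ A ≤ r ∧ 2 * (2 * (M * (r + M + 2 * A)) + 1) ≤ d ∧
    q + 1 + (2 * (M * (r + M + 2 * A)) + 1) ≤ h ∧
    2 * (M * (r + M + 2 * A)) + M * (M * q + M + 3 * A) < h ∧
    M * (M * q + A + r) + M * A < h ∧
    M * (r + r) + M * A < 2 * (2 * (M * (r + M + 2 * A)) + 1) := by
  have hM2 : 1 ≤ M ^ 2 := Nat.one_le_pow _ _ hM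
  have hr1 : M + 2 * A + 1 + 3 * A ≤ r := by nlinarith
  have hr2 : 2 ≤ r := by omega
  have e1 : M * (r + M + 2 * A) ≤ 2 * (M * r) := by
    have : M * (r + M + 2 * A) ≤ M * (2 * r) := Nat.mul_le_mul_left _ (by omega)
    nlinarith
  have hMr : 2 ≤ M * r := by nlinarith
  have hMM : M ≤ M * M := by nlinarith
  have e2 : M * (M + 3 * A) ≤ M * r := Nat.mul_le_mul_left _ (by omega)
  have e3 : 8 * ((M * r) * (M * r)) + 4 * ((M * M * q) * r) + 4 * (M * r) ≤ d := by
    rw [hd]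
    have : 0 ≤ 4 * r * M * ((6 * r + 1) * A) := Nat.zero_le _
    nlinarith
  have e4 : 2 * (M * r) ≤ (M * r) * (M * r) := Nat.mul_le_mul_right _ hMr
  have e5 : M * M * q ≤ (M * M * q) * r := Nat.le_mul_of_pos_right _ (by omega)
  have e6 : q ≤ M * M * q := Nat.le_mul_of_pos_left _ (by omega)
  have e7 : M * A ≤ M * r := Nat.mul_le_mul_left _ (by omega)
  have e8 : M * (M * q + M + 3 * A) = M * M * q + M * (M + 3 * A) := by ring
  have e9 : M * (M * q + A + r) = M * M * q + M * A + M * r := by ring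
  have e10 : M * r ≤ M * (r + M + 2 * A) := Nat.mul_le_mul_left _ (by omega)
  have e11 : M * (r + r) = 2 * (M * r) := by ring
  refine ⟨by omega, ?_, ?_, by omega, by omega, by omega, by omega, by omega, by omega⟩
  · have := Nat.le_pow_clog (b := 2) (by omega) (N + 1)
    rw [← hq] at this
    omega
  · rw [hm]; exact hn.trans (Nat.le_self_pow (by omega) n)

end Pf

/-- with the parameters `r, N, q, d, h, m` chosen as in the proof of the
main theorem, for any `(M,A)`-quasi-isometry `f` from `G := G_{h,d,m}` to a connected
graph `H` there are `m` pairwise disjoint `f(S(G))`–`f(T(G))` paths in `H` avoiding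
`B_H(f(R(G)), Mq + A)` such that for every `u ∈ U := S_1 ∪ ⋯ ∪ S_N` (where
`S_i = S(Δ(x_i)) ∪ {ℓ_i}` for the `i`-th vertex `x_i` at level `q` of `B(G)`) at most one
of the paths meets `B_H(f(u), r)`. -/
theorem statement14 (M A n : ℕ) (hM : 1 ≤ M) (hn : 2 ≤ n)
    (r N q d h m : ℕ)
    (hr : r = M ^ 2 * (3 * A + 1) + 2 * A + M)
    (hN : N = n * (n - 1) / 2)
    (hq : q = Nat.clog 2 (N + 1))
    (hd : d = 4 * r * M * ((2 * r + q) * M + (6 * r + 1) * A + 1))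
    (hh : h = d + 2) (hm : m = n ^ 2)
    {V' : Type} (H : SimpleGraph V') (hH : H.Connected)
    (f : Ghdm.Verts h d m → V') (hf : CGT.IsQI M A (Ghdm.G h d m) H f) :
    ∃ (a b : Fin m → V') (P : ∀ i : Fin m, H.Walk (a i) (b i)),
      (∀ i, (P i).IsPath) ∧
      (∀ i, a i ∈ f '' Ghdm.lift (Ghdm.SsetR h d m) ∧
        b i ∈ f '' Ghdm.lift (Ghdm.TsetR h d m)) ∧
      (∀ i, ∀ v ∈ (P i).support,
        v ∉ CGT.gBall H (f '' Ghdm.lift {Ghdm.RootR m}) (M * q + A)) ∧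
      (∀ i j, i ≠ j → ∀ v, v ∈ (P i).support → v ∉ (P j).support) ∧
      (∀ u : Ghdm.Verts h d m,
        u.1 ∈ ⋃ i ∈ Set.Icc 1 N,
          (Ghdm.SDeltaR h d m (Ghdm.natToBits q i) ∪ {Ghdm.leafLeftR h m (Ghdm.natToBits q i)}) →
        ∀ i j : Fin m,
          (∃ v ∈ (P i).support, v ∈ CGT.gBall H {f u} r) →
          (∃ v ∈ (P j).support, v ∈ CGT.gBall H {f u} r) → i = j) := by
  obtain ⟨h1, h2, h3, h4, h5, h6, h7, h8, h9⟩ := Pf.numerics hM hn hr hN hq hd hh hm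
  exact Pf.main h1 h2 h3 h4 rfl rfl h5 h6 h7 h8 h9 H hH f hf
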